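/- Let d ≥ 1, let f ∈ C^∞(ℝ^d) satisfy ‖(1+|x|²)^{n/2} ∂^β f‖_{L²(ℝ^d)} ≤ D₁ D₂^{n+|β|} (n!)^ν (|β|!)^μ for all n ∈ ℕ₀ and all multi-indices β ∈ ℕ₀^d, with constants D₁ > 0, D₂ ≥ 1, ν ≥ 0 and 0 ≤ μ < 1. Let δ ∈ [0,1] be such that s := δν + μ < 1, and let ρ : ℝ^d → (0,∞) be measurable with ρ(x) ≤ R(1+|x|²)^{δ/2} for all x ∈ ℝ^d (where R ≥ 1) and ρ(x) ≤ η|x| for all |x| ≥ r₀ (where η ∈ (0,1) and r₀ ≥ 1). Let ω ⊂ ℝ^d be any measurable set satisfying |B(x,ρ(x)) ∩ ω| / |B(x,ρ(x))| ≥ γ₀/(1+|x|^a) for all x ∈ ℝ^d, with some γ₀ ∈ (0,1) and some a > 0. Then there is a constant K ≥ 1, depending only on γ₀, R, r₀, η, ν, s, a and d, such that for every ε ∈ (0,1], one has ‖f‖²_{L²(ℝ^d)} ≤ exp(K·(1 + log(1/ε) + D₂^{4/(1−s)})²) · ‖f‖²_{L²(ω)} + ε D₁². -/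

import Mathlib

open MeasureTheory

/-- The partial derivative in the `i`-th coordinate direction. -/
noncomputable def pderivE {d : ℕ} (i : Fin d) (f : EuclideanSpace ℝ (Fin d) → ℝ) :
    EuclideanSpace ℝ (Fin d) → ℝ :=
  fun x => fderiv ℝ f x (EuclideanSpace.single i 1)

/-- The multi-index partial derivative `∂^β f` for `β ∈ ℕ₀^d`. -/
noncomputable def mderiv {d : ℕ} (β : Fin d → ℕ) (f : EuclideanSpace ℝ (Fin d) → ℝ) :
    EuclideanSpace ℝ (Fin d) → ℝ :=
  (List.finRange d).foldr (fun i g => (pderivE i)^[β i] g) f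

/-!
On a ball of radius `ρ(x) ≲ ⟨x⟩^δ` the Gelfand–Shilov bounds and the Sobolev embedding give
`ρ(x)^m |∂^w f| ≤ D₁ (A D₂³)^m (m!)^s` for all words `w` of length `m`, with `s < 1`. From any point
of the ball, some ray meets the set where `|f|` is at most twice its mean square over `ω` in a long
piece, and Lagrange interpolation at `m` separated nodes of that piece bounds `f` at the starting
point by that mean, up to an error `(A D₂³)^m (m!)^(s - 1)`. A Besicovitch covering sums these local
estimates over `|x| ≤ e^X`, where the density of `ω` is at least a constant times `e^(-aX)`, and the
decay of `f` takes care of `|x| > e^X`. With `X = 1 + log (1/ε) + D₂^(4/(1-s))` and `m` a large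
multiple of `X`, all errors are at most `ε D₁²`, while the constant in front of the integral over
`ω` is of size `(m e^(cX))^(2m) ≤ e^(K X²)`.
-/

section Interpolation

theorem exists_iteratedDeriv_eq_zero {m : ℕ} {g : ℝ → ℝ} (hg : ContDiff ℝ m g)
    {x : Fin (m + 1) → ℝ} (hx : StrictMono x) (hzero : ∀ i, g (x i) = 0) :
    ∃ ξ ∈ Set.Icc (x 0) (x (Fin.last m)), iteratedDeriv m g ξ = 0 := by
  induction m generalizing g with
  | zero => exact ⟨x 0, ⟨le_rfl, le_rfl⟩, by simpa using hzero 0⟩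
  | succ m ih =>
    have rolle (i : Fin (m + 1)) : ∃ y ∈ Set.Ioo (x i.castSucc) (x i.succ), deriv g y = 0 :=
      exists_deriv_eq_zero (hx i.castSucc_lt_succ) hg.continuous.continuousOn
        (by rw [hzero, hzero])
    choose y y_mem hy using rolle
    have y_mono : StrictMono y := Fin.strictMono_iff_lt_succ.2 fun i =>
      (y_mem i.castSucc).2.trans (y_mem i.succ).1
    have hg' : ContDiff ℝ m (deriv g) := by
      rw [Nat.cast_succ, contDiff_succ_iff_deriv] at hg
      exact hg.2.2
    obtain ⟨ξ, hξ, hξ0⟩ := ih hg' y_mono hy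
    exact ⟨ξ, ⟨(y_mem 0).1.le.trans hξ.1, hξ.2.trans (y_mem (Fin.last m)).2.le⟩,
      by rwa [iteratedDeriv_succ']⟩

theorem iteratedDeriv_polynomial_eval (P : Polynomial ℝ) (m : ℕ) :
    iteratedDeriv m (fun x => P.eval x) = fun x => (Polynomial.derivative^[m] P).eval x := by
  induction m generalizing P with
  | zero => simp
  | succ m ih =>
    have hderiv : deriv (fun x => P.eval x) = fun x => P.derivative.eval x :=
      funext fun x => P.deriv
    rw [iteratedDeriv_succ', hderiv, ih, Function.iterate_succ_apply]

/-- The leading coefficient of the polynomial of degree `≤ m` interpolating `h` at the nodes `x`,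
that is, the divided difference `h[x₀, …, xₘ]`. -/
noncomputable def dividedDifference {m : ℕ} (h : ℝ → ℝ) (x : Fin (m + 1) → ℝ) : ℝ :=
  ∑ i, h (x i) / ∏ j ∈ Finset.univ.erase i, (x i - x j)

theorem exists_iteratedDeriv_eq_dividedDifference {m : ℕ} {h : ℝ → ℝ} (hh : ContDiff ℝ m h)
    {x : Fin (m + 1) → ℝ} (hx : StrictMono x) :
    ∃ ξ ∈ Set.Icc (x 0) (x (Fin.last m)),
      iteratedDeriv m h ξ = m.factorial * dividedDifference h x := by
  have hinj : Set.InjOn x (Finset.univ : Finset (Fin (m + 1))) := hx.injective.injOn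
  set P := Lagrange.interpolate Finset.univ x fun i => h (x i)
  have hP (i : Fin (m + 1)) : P.eval (x i) = h (x i) :=
    Lagrange.eval_interpolate_at_node _ hinj (Finset.mem_univ i)
  have hPdiff : ContDiff ℝ m fun t => P.eval t := by simpa using P.contDiff_aeval (𝕜 := ℝ) m
  have hdeg : P.degree < (Finset.univ : Finset (Fin (m + 1))).card :=
    Lagrange.degree_interpolate_lt _ hinj
  obtain ⟨ξ, hξ, hzero⟩ := exists_iteratedDeriv_eq_zero (g := fun t => h t - P.eval t)
    (hh.sub hPdiff) hx fun i => by rw [hP, sub_self]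
  refine ⟨ξ, hξ, ?_⟩
  rw [iteratedDeriv_fun_sub hh.contDiffAt hPdiff.contDiffAt, sub_eq_zero,
    iteratedDeriv_polynomial_eval] at hzero
  beta_reduce at hzero
  rw [Lagrange.eval_iterate_derivative_eq_sum hinj hdeg (k := m) (by simp)] at hzero
  simp only [hP] at hzero
  simpa [dividedDifference] using hzero

theorem pow_le_prod_abs_sub {m : ℕ} {x : Fin (m + 1) → ℝ} {κ : ℝ} (hκ : 0 ≤ κ)
    (hsep : ∀ i j, i < j → κ ≤ x j - x i) (i : Fin (m + 1)) :
    κ ^ m ≤ ∏ j ∈ Finset.univ.erase i, |x i - x j| := by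
  have hle (j : Fin (m + 1)) (hj : j ∈ Finset.univ.erase i) : κ ≤ |x i - x j| := by
    rcases lt_or_gt_of_ne (Finset.ne_of_mem_erase hj) with hlt | hlt
    · exact (hsep j i hlt).trans (le_abs_self _)
    · exact (hsep i j hlt).trans (abs_sub_comm (x i) _ ▸ le_abs_self _)
  simpa [Finset.card_erase_of_mem] using Finset.prod_le_prod (fun _ _ => hκ) hle

theorem abs_le_of_separated_nodes {m : ℕ} {h : ℝ → ℝ} (hh : ContDiff ℝ m h)
    {x : Fin (m + 1) → ℝ} {κ S B : ℝ} (hκ : 0 < κ) (hlen : x (Fin.last m) - x 0 ≤ 1)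
    (hsep : ∀ i j, i < j → κ ≤ x j - x i) (hS : ∀ i ≠ 0, |h (x i)| ≤ S)
    (hB : ∀ ξ ∈ Set.Icc (x 0) (x (Fin.last m)), |iteratedDeriv m h ξ| ≤ B) :
    |h (x 0)| ≤ B / m.factorial + m * κ⁻¹ ^ m * S := by
  have hx : StrictMono x := fun i j hij => by linarith [hsep i j hij]
  obtain ⟨ξ, hξ, hdiv⟩ := exists_iteratedDeriv_eq_dividedDifference hh hx
  set W := ∏ j ∈ Finset.univ.erase 0, (x 0 - x j)
  set T := ∑ i ∈ Finset.univ.erase 0, h (x i) / ∏ j ∈ Finset.univ.erase i, (x i - x j)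
  have hW0 : W ≠ 0 := Finset.prod_ne_zero_iff.2 fun j hj =>
    sub_ne_zero.2 (hx.injective.ne (Finset.ne_of_mem_erase hj).symm)
  have hW1 : |W| ≤ 1 := by
    refine (Finset.abs_prod _ _).trans_le (Finset.prod_le_one (fun _ _ => abs_nonneg _) ?_)
    intro j _
    rw [abs_sub_comm, abs_of_nonneg (sub_nonneg.2 (hx.monotone (Fin.zero_le j)))]
    linarith [hx.monotone (Fin.le_last j)]
  have hTerm (i : Fin (m + 1)) (hi : i ∈ Finset.univ.erase 0) :
      |h (x i) / ∏ j ∈ Finset.univ.erase i, (x i - x j)| ≤ κ⁻¹ ^ m * S := by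
    have hprod := pow_le_prod_abs_sub hκ.le hsep i
    have hSi := hS i (Finset.ne_of_mem_erase hi)
    rw [abs_div, Finset.abs_prod, inv_pow, inv_mul_eq_div]
    gcongr
    exact (abs_nonneg _).trans hSi
  have hTle : |T| ≤ m * κ⁻¹ ^ m * S := by
    refine (Finset.abs_sum_le_sum_abs _ _).trans ((Finset.sum_le_sum hTerm).trans_eq ?_)
    simp [Finset.card_erase_of_mem, mul_assoc]
  have hsolve : h (x 0) = W * (iteratedDeriv m h ξ / m.factorial - T) := by
    rw [hdiv, dividedDifference, ← Finset.add_sum_erase _ _ (Finset.mem_univ 0),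
      mul_div_cancel_left₀ _ (by positivity), add_sub_cancel_right, mul_div_cancel₀ _ hW0]
  calc |h (x 0)| = |W| * |iteratedDeriv m h ξ / m.factorial - T| := by rw [hsolve, abs_mul]
    _ ≤ 1 * (|iteratedDeriv m h ξ| / m.factorial + |T|) := by
        gcongr
        simpa [abs_div] using abs_sub (iteratedDeriv m h ξ / m.factorial) T
    _ ≤ B / m.factorial + m * κ⁻¹ ^ m * S := by
        rw [one_mul]
        gcongr
        exact hB ξ hξ

theorem exists_separated_nodes {κ : ℝ} (hκ : 0 ≤ κ) {m : ℕ} {A : Set ℝ} (hA : IsCompact A)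
    (hvol : ENNReal.ofReal (m * κ) < volume A) :
    ∃ x : Fin (m + 1) → ℝ, (∀ i, x i ∈ A) ∧ ∀ i j, i < j → κ ≤ x j - x i := by
  induction m generalizing A with
  | zero =>
    obtain ⟨t, ht⟩ := nonempty_of_measure_ne_zero (ne_bot_of_gt hvol)
    exact ⟨fun _ => t, fun _ => ht, fun i j hij => by omega⟩
  | succ m ih =>
    obtain ⟨t, htA, htmin⟩ := hA.exists_isLeast (nonempty_of_measure_ne_zero (ne_bot_of_gt hvol))
    have hrest : ENNReal.ofReal (m * κ) < volume (A ∩ Set.Ici (t + κ)) := by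
      by_contra! hsmall
      have hcover : A ⊆ (A ∩ Set.Ici (t + κ)) ∪ Set.Ico t (t + κ) := fun y hy =>
        (le_or_gt (t + κ) y).imp (fun h => ⟨hy, h⟩) fun h => ⟨htmin hy, h⟩
      refine hvol.not_ge ?_
      calc volume A ≤ volume (A ∩ Set.Ici (t + κ)) + volume (Set.Ico t (t + κ)) :=
            (measure_mono hcover).trans (measure_union_le _ _)
        _ ≤ ENNReal.ofReal (m * κ) + ENNReal.ofReal κ := by gcongr; simp
        _ = ENNReal.ofReal ((m + 1 : ℕ) * κ) := by
            rw [← ENNReal.ofReal_add (by positivity) hκ, Nat.cast_succ, add_one_mul]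
    obtain ⟨x, hxA, hsep⟩ := ih (hA.inter_right isClosed_Ici) hrest
    refine ⟨Fin.cons t x, Fin.cases htA fun i => (hxA i).1, fun i j => ?_⟩
    cases j using Fin.cases with
    | zero => simp
    | succ j =>
      cases i using Fin.cases with
      | zero =>
        have : t + κ ≤ x j := (hxA j).2
        exact fun _ => by simp; linarith
      | succ i => simpa using hsep i j

theorem abs_le_of_abs_le_on_large_set {m : ℕ} (hm : 1 ≤ m) {h : ℝ → ℝ} (hh : ContDiff ℝ m h)
    {E : Set ℝ} (hE : MeasurableSet E) (hE1 : E ⊆ Set.Icc (1 / 2) 1) {c S B : ℝ} (hc : 0 < c)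
    (hvol : ENNReal.ofReal c < volume E) (hS : ∀ t ∈ E, |h t| ≤ S)
    (hB : ∀ t ∈ E, ∀ ξ ∈ Set.Icc 0 t, |iteratedDeriv m h ξ| ≤ B) :
    |h 0| ≤ B / m.factorial + m * (m / c) ^ m * S := by
  obtain ⟨A, hAE, hAcomp, hAvol⟩ := hE.exists_lt_isCompact hvol
  obtain ⟨n, rfl⟩ : ∃ n, m = n + 1 := ⟨m - 1, by omega⟩
  have hc_half : c ≤ 1 / 2 := by
    have := (ENNReal.ofReal_lt_ofReal_iff (by norm_num)).1
      (hvol.trans_le ((measure_mono hE1).trans_eq Real.volume_Icc))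
    linarith
  have hκ_half : c / (n + 1 : ℕ) ≤ 1 / 2 := (div_le_self hc.le (by simp)).trans hc_half
  obtain ⟨y, hyA, hsep⟩ := exists_separated_nodes (κ := c / (n + 1 : ℕ)) (m := n)
    (by positivity) hAcomp
    (hAvol.trans_le' (ENNReal.ofReal_le_ofReal (by push_cast; field_simp; linarith)))
  have hy (i : Fin (n + 1)) : y i ∈ Set.Icc (1 / 2) 1 := hE1 (hAE (hyA i))
  have := abs_le_of_separated_nodes (x := Fin.cons 0 y) (κ := c / (n + 1 : ℕ)) (S := S) hh
    (by positivity)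
    (by simpa using (hy (Fin.last n)).2) ?_ ?_ (hB _ (hAE (hyA (Fin.last n))))
  · simpa [inv_div] using this
  · intro i j
    cases j using Fin.cases with
    | zero => simp
    | succ j =>
      cases i using Fin.cases with
      | zero => exact fun _ => by simpa using hκ_half.trans (hy j).1
      | succ i => simpa using hsep i j
  · exact Fin.cases (fun h => absurd rfl h) fun i _ => hS _ (hAE (hyA i))

end Interpolation

section Rays

variable {E : Type*} [NormedAddCommGroup E] [NormedSpace ℝ E] [FiniteDimensional ℝ E]
  [MeasurableSpace E] [BorelSpace E] (μ : Measure E) [μ.IsAddHaarMeasure]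

theorem measure_le_measure_inter_ball_of_homothety {x y : E} {r t : ℝ} {W : Set E}
    (hW : W ⊆ Metric.ball x r) (hy : y ∈ Metric.ball x r) (ht : t ∈ Set.Icc (1 / 2) 1) :
    μ W ≤ μ ({z | y + t • z ∈ W} ∩ Metric.ball 0 (4 * r)) := by
  have ht0 : 0 < t := by linarith [ht.1]
  have hball : {z | y + t • z ∈ W} ⊆ Metric.ball 0 (4 * r) := by
    intro z hz
    have hlt : ‖t • z‖ < 2 * r := by
      have htri := dist_triangle_right (y + t • z) y x
      rw [dist_self_add_left] at htri
      linarith [Metric.mem_ball.1 (hW hz), Metric.mem_ball.1 hy]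
    rw [norm_smul, Real.norm_of_nonneg ht0.le] at hlt
    rw [mem_ball_zero_iff]
    nlinarith [ht.1, norm_nonneg z]
  have hone : 1 ≤ ENNReal.ofReal |(t ^ Module.finrank ℝ E)⁻¹| := by
    rw [ENNReal.one_le_ofReal, abs_of_pos (by positivity)]
    exact (one_le_inv₀ (by positivity)).2 (pow_le_one₀ ht0.le ht.2)
  calc μ W ≤ ENNReal.ofReal |(t ^ Module.finrank ℝ E)⁻¹| * μ W := le_mul_of_one_le_left' hone
    _ = μ ((t • ·) ⁻¹' ((y + ·) ⁻¹' W)) := by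
        rw [Measure.addHaar_preimage_smul _ ht0.ne', measure_preimage_add]
    _ = μ ({z | y + t • z ∈ W} ∩ Metric.ball 0 (4 * r)) := by
        rw [Set.inter_eq_left.2 hball]; rfl

-- By Tonelli, the mean over `‖z‖ < 4r` of the length of `{t | y + t • z ∈ W}` is at least
-- `μ W / (2 μ (ball 0 (4r)))`.
theorem exists_large_ray_section {x y : E} {r γ : ℝ} (hγ : 0 < γ) {W : Set E}
    (hWmeas : MeasurableSet W) (hW : W ⊆ Metric.ball x r) (hy : y ∈ Metric.ball x r)
    (hdens : ENNReal.ofReal γ * μ (Metric.ball x r) ≤ μ W) :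
    ∃ z : E, ‖z‖ ≤ 4 * r ∧ ENNReal.ofReal (γ / 4 ^ (Module.finrank ℝ E + 1)) <
      volume (Set.Icc (1 / 2) 1 ∩ {t : ℝ | y + t • z ∈ W}) := by
  by_contra! hsmall
  have hr : 0 < r := Metric.pos_of_mem_ball hy
  set n := Module.finrank ℝ E
  set J : Set ℝ := Set.Icc (1 / 2) 1
  set P : Set (E × ℝ) := {p | y + p.2 • p.1 ∈ W}
  have hP : MeasurableSet P := (by fun_prop : Measurable fun p : E × ℝ => y + p.2 • p.1) hWmeas
  have upper : (μ.restrict (Metric.ball 0 (4 * r))).prod (volume.restrict J) P ≤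
      ENNReal.ofReal (γ / 4 ^ (n + 1)) * μ (Metric.ball 0 (4 * r)) := by
    rw [Measure.prod_apply hP, ← setLIntegral_const]
    refine setLIntegral_mono' measurableSet_ball fun z hz => ?_
    rw [Measure.restrict_apply (measurable_prodMk_left hP), Set.inter_comm]
    exact hsmall z (mem_ball_zero_iff.1 hz).le
  have lower : ENNReal.ofReal (1 / 2) * μ W ≤
      (μ.restrict (Metric.ball 0 (4 * r))).prod (volume.restrict J) P := by
    have hJ : ENNReal.ofReal (1 / 2) = volume J := by rw [Real.volume_Icc]; norm_num
    rw [Measure.prod_apply_symm hP, hJ, mul_comm, ← setLIntegral_const]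
    refine setLIntegral_mono' measurableSet_Icc fun t ht => ?_
    rw [Measure.restrict_apply (measurable_prodMk_right hP)]
    exact measure_le_measure_inter_ball_of_homothety μ hW hy ht
  have hball : μ (Metric.ball 0 (4 * r)) = ENNReal.ofReal (4 ^ n) * μ (Metric.ball x r) := by
    rw [Measure.addHaar_ball_mul_of_pos _ _ (by norm_num), ← Measure.addHaar_ball_center _ x]
  have hcmp : ENNReal.ofReal (1 / 2 * γ) * μ (Metric.ball x r) ≤
      ENNReal.ofReal (γ / 4 ^ (n + 1) * 4 ^ n) * μ (Metric.ball x r) := by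
    rw [ENNReal.ofReal_mul (by norm_num), ENNReal.ofReal_mul (by positivity), mul_assoc, mul_assoc,
      ← hball]
    exact (mul_le_mul_right hdens _).trans (lower.trans upper)
  rw [ENNReal.mul_le_mul_iff_left (Metric.measure_ball_pos _ _ hr).ne' measure_ball_lt_top.ne,
    ENNReal.ofReal_le_ofReal_iff (by positivity), pow_succ] at hcmp
  field_simp at hcmp
  linarith

end Rays

section WordDeriv

variable {d : ℕ}

/-- The iterated partial derivative `∂_{w₁} ⋯ ∂_{wₖ} f` along a word `w` of coordinates. Unlike
multi-indices, words record the order of differentiation, which is what differentiating one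
variable at a time produces. -/
noncomputable def wordDeriv (w : List (Fin d)) (f : EuclideanSpace ℝ (Fin d) → ℝ) :
    EuclideanSpace ℝ (Fin d) → ℝ :=
  w.foldr pderivE f

variable {f : EuclideanSpace ℝ (Fin d) → ℝ}

theorem contDiff_pderivE (hf : ContDiff ℝ (⊤ : ℕ∞) f) (i : Fin d) :
    ContDiff ℝ (⊤ : ℕ∞) (pderivE i f) :=
  (hf.fderiv_right (by simp)).clm_apply contDiff_const

theorem contDiff_wordDeriv (hf : ContDiff ℝ (⊤ : ℕ∞) f) (w : List (Fin d)) :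
    ContDiff ℝ (⊤ : ℕ∞) (wordDeriv w f) := by
  induction w with
  | nil => exact hf
  | cons i w ih => exact contDiff_pderivE ih i

theorem wordDeriv_append (u w : List (Fin d)) (f : EuclideanSpace ℝ (Fin d) → ℝ) :
    wordDeriv (u ++ w) f = wordDeriv u (wordDeriv w f) :=
  List.foldr_append

theorem wordDeriv_replicate (i : Fin d) (n : ℕ) (f : EuclideanSpace ℝ (Fin d) → ℝ) :
    wordDeriv (List.replicate n i) f = (pderivE i)^[n] f := by
  induction n with
  | zero => rfl
  | succ n ih =>
    rw [Function.iterate_succ_apply', ← ih, List.replicate_succ]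
    rfl

theorem pderivE_comm (hf : ContDiff ℝ 2 f) (i j : Fin d) :
    pderivE i (pderivE j f) = pderivE j (pderivE i f) := by
  have hdiff : Differentiable ℝ (fderiv ℝ f) :=
    (hf.fderiv_right (m := 1) (by norm_num)).differentiable (by norm_num)
  have hsecond (a b : Fin d) (x : EuclideanSpace ℝ (Fin d)) : pderivE a (pderivE b f) x =
      fderiv ℝ (fderiv ℝ f) x (EuclideanSpace.single a 1) (EuclideanSpace.single b 1) := by
    unfold pderivE
    rw [fderiv_clm_apply (hdiff x) (differentiableAt_const _)]
    simp
  ext x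
  rw [hsecond, hsecond]
  exact hf.contDiffAt.isSymmSndFDerivAt (by simp) _ _

theorem wordDeriv_perm {u w : List (Fin d)} (h : u.Perm w) (hf : ContDiff ℝ (⊤ : ℕ∞) f) :
    wordDeriv u f = wordDeriv w f := by
  induction h with
  | nil => rfl
  | cons i _ ih => exact congrArg (pderivE i) ih
  | swap i j w =>
    exact pderivE_comm (contDiff_infty.1 (contDiff_wordDeriv hf w) 2) j i
  | trans _ _ ih₁ ih₂ => exact ih₁.trans ih₂

theorem mderiv_eq_wordDeriv (β : Fin d → ℕ) (f : EuclideanSpace ℝ (Fin d) → ℝ) :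
    mderiv β f = wordDeriv ((List.finRange d).flatMap fun i => List.replicate (β i) i) f := by
  unfold mderiv
  induction List.finRange d with
  | nil => rfl
  | cons i l ih => rw [List.flatMap_cons, wordDeriv_append, ← ih, wordDeriv_replicate]; rfl

theorem wordDeriv_eq_mderiv_count (hf : ContDiff ℝ (⊤ : ℕ∞) f) (w : List (Fin d)) :
    wordDeriv w f = mderiv (fun i => w.count i) f := by
  rw [mderiv_eq_wordDeriv]
  refine wordDeriv_perm (List.perm_iff_count.2 fun a => ?_) hf
  rw [List.count_flatMap, ← List.ofFn_eq_map, List.sum_ofFn]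
  simp [List.count_replicate]

theorem sum_count_eq_length (w : List (Fin d)) : ∑ i, w.count i = w.length := by
  induction w with
  | nil => simp
  | cons a w ih => simp [List.count_cons, Finset.sum_add_distrib, ih]

theorem deriv_comp_line (hf : Differentiable ℝ f) (y z : EuclideanSpace ℝ (Fin d)) :
    deriv (fun s : ℝ => f (y + s • z)) = fun s => ∑ i, z i * pderivE i f (y + s • z) := by
  ext s
  have hline : HasDerivAt (fun s : ℝ => y + s • z) z s := by
    simpa using ((hasDerivAt_id s).smul_const z).const_add y
  have hz : z = ∑ i, z i • EuclideanSpace.single i (1 : ℝ) := by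
    simpa using ((EuclideanSpace.basisFun (Fin d) ℝ).sum_repr z).symm
  calc deriv (fun s : ℝ => f (y + s • z)) s = fderiv ℝ f (y + s • z) z :=
        ((hf (y + s • z)).hasFDerivAt.comp_hasDerivAt s hline).deriv
    _ = fderiv ℝ f (y + s • z) (∑ i, z i • EuclideanSpace.single i (1 : ℝ)) := by rw [← hz]
    _ = ∑ i, z i * pderivE i f (y + s • z) := by simp [pderivE]

theorem abs_iteratedDeriv_comp_line_le (hf : ContDiff ℝ (⊤ : ℕ∞) f)
    {y z : EuclideanSpace ℝ (Fin d)} {t B : ℝ} {m : ℕ}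
    (hB : ∀ w : List (Fin d), w.length = m → |wordDeriv w f (y + t • z)| ≤ B) :
    |iteratedDeriv m (fun s : ℝ => f (y + s • z)) t| ≤ (d * ‖z‖) ^ m * B := by
  induction m generalizing f with
  | zero => simpa [wordDeriv] using hB [] rfl
  | succ m ih =>
    have hsmooth (i : Fin d) : ContDiff ℝ m fun s : ℝ => z i * pderivE i f (y + s • z) :=
      contDiff_const.mul ((contDiff_infty.1 (contDiff_pderivE hf i) m).comp
        (by fun_prop))
    have hterm (i : Fin d) : |iteratedDeriv m (fun s => z i * pderivE i f (y + s • z)) t| ≤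
        ‖z‖ * ((d * ‖z‖) ^ m * B) := by
      rw [iteratedDeriv_const_mul_field, abs_mul]
      gcongr
      · exact PiLp.norm_apply_le z i
      · refine ih (contDiff_pderivE hf i) fun w hw => ?_
        exact wordDeriv_append w [i] f ▸ hB (w ++ [i]) (by simp [hw])
    rw [iteratedDeriv_succ', deriv_comp_line (hf.differentiable (by simp)),
      iteratedDeriv_fun_sum fun i _ => (hsmooth i).contDiffAt]
    calc |∑ i, iteratedDeriv m (fun s => z i * pderivE i f (y + s • z)) t|
        ≤ ∑ _i : Fin d, ‖z‖ * ((d * ‖z‖) ^ m * B) :=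
          (Finset.abs_sum_le_sum_abs _ _).trans (Finset.sum_le_sum fun i _ => hterm i)
      _ = (d * ‖z‖) ^ (m + 1) * B := by
          rw [Finset.sum_const, Finset.card_univ, Fintype.card_fin, nsmul_eq_mul]
          ring

-- On each ray from `y` that meets `W` in a long set, `f` is a one-variable function that is small
-- on that set and has small `m`-th derivative.
theorem abs_le_of_abs_le_on_dense_subset (hf : ContDiff ℝ (⊤ : ℕ∞) f)
    {x y : EuclideanSpace ℝ (Fin d)} {r γ S B : ℝ} (hγ : 0 < γ)
    {W : Set (EuclideanSpace ℝ (Fin d))} (hWmeas : MeasurableSet W) (hW : W ⊆ Metric.ball x r)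
    (hdens : ENNReal.ofReal γ * volume (Metric.ball x r) ≤ volume W)
    (hS : ∀ z ∈ W, |f z| ≤ S) {m : ℕ} (hm : 1 ≤ m)
    (hB0 : 0 ≤ B)
    (hB : ∀ w : List (Fin d), w.length = m → ∀ z ∈ Metric.ball x r, |wordDeriv w f z| ≤ B)
    (hy : y ∈ Metric.ball x r) :
    |f y| ≤ (d * (4 * r)) ^ m * B / m.factorial + m * (4 ^ (d + 1) * m / γ) ^ m * S := by
  obtain ⟨z, hz, hlen⟩ := exists_large_ray_section volume hγ hWmeas hW hy hdens
  rw [finrank_euclideanSpace_fin] at hlen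
  have hmeas : MeasurableSet {t : ℝ | y + t • z ∈ W} :=
    (by fun_prop : Measurable fun t : ℝ => y + t • z) hWmeas
  have hderiv (t : ℝ) (ht : t ∈ Set.Icc (1 / 2) 1 ∩ {t : ℝ | y + t • z ∈ W}) (ξ : ℝ)
      (hξ : ξ ∈ Set.Icc 0 t) :
      |iteratedDeriv m (fun s : ℝ => f (y + s • z)) ξ| ≤ (d * (4 * r)) ^ m * B := by
    have ht0 : 0 < t := by linarith [ht.1.1]
    have hmem : y + ξ • z ∈ Metric.ball x r := by
      have := (convex_ball x r).add_smul_sub_mem hy (hW ht.2) (t := ξ / t)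
        ⟨div_nonneg hξ.1 ht0.le, (div_le_one ht0).2 hξ.2⟩
      rwa [add_sub_cancel_left, smul_smul, div_mul_cancel₀ _ ht0.ne'] at this
    refine (abs_iteratedDeriv_comp_line_le hf fun w hw => hB w hw _ hmem).trans ?_
    gcongr
  have := abs_le_of_abs_le_on_large_set hm (h := fun s : ℝ => f (y + s • z)) (S := S)
    ((contDiff_infty.1 hf m).comp (by fun_prop)) (measurableSet_Icc.inter hmeas)
    Set.inter_subset_left (by positivity) hlen (fun t ht => hS _ ht.2) hderiv
  simpa [div_div_eq_mul_div, mul_comm] using this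

end WordDeriv

section JapaneseBracket

variable {E : Type*} [SeminormedAddCommGroup E]

/-- The Japanese bracket `⟨x⟩ = (1 + |x|²)^{1/2}`, the weight in which decay is measured. -/
noncomputable def japaneseBracket (x : E) : ℝ :=
  √(1 + ‖x‖ ^ 2)

theorem sq_japaneseBracket (x : E) : japaneseBracket x ^ 2 = 1 + ‖x‖ ^ 2 :=
  Real.sq_sqrt (by positivity)

theorem one_le_japaneseBracket (x : E) : 1 ≤ japaneseBracket x :=
  Real.one_le_sqrt.2 (by linarith [sq_nonneg ‖x‖])

theorem japaneseBracket_pos (x : E) : 0 < japaneseBracket x :=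
  one_pos.trans_le (one_le_japaneseBracket x)

theorem continuous_japaneseBracket : Continuous (japaneseBracket : E → ℝ) := by
  unfold japaneseBracket
  fun_prop

theorem norm_le_japaneseBracket (x : E) : ‖x‖ ≤ japaneseBracket x :=
  Real.le_sqrt_of_sq_le (by linarith)

theorem rpow_one_add_norm_sq (x : E) (s : ℝ) :
    (1 + ‖x‖ ^ 2) ^ (s / 2) = japaneseBracket x ^ s := by
  rw [japaneseBracket, Real.sqrt_eq_rpow, ← Real.rpow_mul (by positivity), one_div_mul_eq_div]

theorem japaneseBracket_le_mul (x z : E) :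
    japaneseBracket x ≤ (1 + ‖x - z‖) * japaneseBracket z := by
  refine Real.sqrt_le_iff.2 ⟨by positivity [japaneseBracket_pos z], ?_⟩
  have htri : ‖x‖ ≤ ‖x - z‖ + ‖z‖ := by simpa using norm_add_le (x - z) z
  calc 1 + ‖x‖ ^ 2 ≤ 1 + (‖x - z‖ + ‖z‖) ^ 2 := by gcongr
    _ ≤ (1 + ‖x - z‖) ^ 2 * (1 + ‖z‖ ^ 2) := by
        nlinarith [norm_nonneg (x - z), norm_nonneg z, sq_nonneg (‖z‖ - 1),
          mul_nonneg (norm_nonneg (x - z)) (sq_nonneg (‖z‖ - 1)),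
          mul_nonneg (norm_nonneg (x - z)) (sq_nonneg ‖z‖), sq_nonneg (‖x - z‖ * ‖z‖)]
    _ = ((1 + ‖x - z‖) * japaneseBracket z) ^ 2 := by rw [mul_pow, sq_japaneseBracket]

end JapaneseBracket

section Sobolev

variable {d : ℕ}

theorem enorm_le_lintegral_enorm_add_enorm_deriv {φ : ℝ → ℝ} (hφ : ContDiff ℝ 1 φ) {b s : ℝ}
    (hs : s ∈ Set.Icc b (b + 1)) :
    ‖φ s‖ₑ ≤ ∫⁻ t in Set.Icc b (b + 1), (‖φ t‖ₑ + ‖deriv φ t‖ₑ) := by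
  have hderiv : Continuous (deriv φ) := hφ.continuous_deriv le_rfl
  set V := ∫⁻ t in Set.Icc b (b + 1), ‖deriv φ t‖ₑ
  have hpoint (t : ℝ) (ht : t ∈ Set.Icc b (b + 1)) : ‖φ s‖ₑ ≤ ‖φ t‖ₑ + V := by
    have hftc : ∫ r in t..s, deriv φ r = φ s - φ t :=
      intervalIntegral.integral_deriv_eq_sub (fun x _ => hφ.differentiable one_ne_zero x)
        (hderiv.intervalIntegrable _ _)
    have hvar : ‖φ s - φ t‖ₑ ≤ V :=
      calc ‖φ s - φ t‖ₑ = ‖∫ r in Set.uIoc t s, deriv φ r‖ₑ := by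
            rw [← hftc, ← ofReal_norm, ← ofReal_norm, intervalIntegral.norm_intervalIntegral_eq]
        _ ≤ ∫⁻ r in Set.uIoc t s, ‖deriv φ r‖ₑ := enorm_integral_le_lintegral_enorm _
        _ ≤ V := lintegral_mono_set (Set.uIoc_subset_uIcc.trans (Set.uIcc_subset_Icc ht hs))
    calc ‖φ s‖ₑ = ‖φ t + (φ s - φ t)‖ₑ := by rw [add_sub_cancel]
      _ ≤ ‖φ t‖ₑ + V := (enorm_add_le _ _).trans (by gcongr)
  calc ‖φ s‖ₑ = ∫⁻ _ in Set.Icc b (b + 1), ‖φ s‖ₑ := by simp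
    _ ≤ ∫⁻ t in Set.Icc b (b + 1), (‖φ t‖ₑ + V) := setLIntegral_mono' measurableSet_Icc hpoint
    _ = ∫⁻ t in Set.Icc b (b + 1), (‖φ t‖ₑ + ‖deriv φ t‖ₑ) := by
        rw [lintegral_add_right _ measurable_const,
          lintegral_add_left hφ.continuous.measurable.enorm]
        simp [V]

theorem hasDerivAt_comp_update {g : EuclideanSpace ℝ (Fin d) → ℝ} (hg : Differentiable ℝ g)
    (x : Fin d → ℝ) (i : Fin d) (t : ℝ) :
    HasDerivAt (fun t => g (WithLp.toLp 2 (Function.update x i t)))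
      (pderivE i g (WithLp.toLp 2 (Function.update x i t))) t := by
  have hupdate : HasDerivAt (fun t => WithLp.toLp 2 (Function.update x i t))
      (EuclideanSpace.single i (1 : ℝ)) t :=
    (PiLp.hasFDerivAt_toLp 2 _).comp_hasDerivAt t (hasDerivAt_update x i t)
  exact (hg _).hasFDerivAt.comp_hasDerivAt t hupdate

-- The majorant `H` keeps the iterated integral of the induction a single marginal.
theorem enorm_le_lmarginal_of_enorm_wordDeriv_le {b : Fin d → ℝ} {s : Finset (Fin d)}
    {g : EuclideanSpace ℝ (Fin d) → ℝ} (hg : ContDiff ℝ (⊤ : ℕ∞) g) {H : (Fin d → ℝ) → ENNReal}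
    (hH : Measurable H)
    (hle : ∀ u : List (Fin d), u.length ≤ s.card → ∀ x : Fin d → ℝ,
      ‖wordDeriv u g (WithLp.toLp 2 x)‖ₑ ≤ H x)
    {x : Fin d → ℝ} (hx : ∀ i, x i ∈ Set.Icc (b i) (b i + 1)) :
    ‖g (WithLp.toLp 2 x)‖ₑ ≤
      2 ^ s.card * lmarginal (fun i => volume.restrict (Set.Icc (b i) (b i + 1))) s H x := by
  induction s using Finset.induction_on generalizing g x with
  | empty => simpa [wordDeriv] using hle [] (by simp) x
  | insert i s hi ih =>
    rw [Finset.card_insert_of_notMem hi] at hle ⊢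
    rw [lmarginal_insert _ hH hi, ← lintegral_const_mul' _ _ (by simp)]
    have hupdate (t : ℝ) (ht : t ∈ Set.Icc (b i) (b i + 1)) (j : Fin d) :
        Function.update x i t j ∈ Set.Icc (b j) (b j + 1) := by
      rcases eq_or_ne j i with rfl | hj
      · simpa using ht
      · simpa [hj] using hx j
    have hderiv := hasDerivAt_comp_update (hg.differentiable (by simp)) x i
    have hsmooth : ContDiff ℝ 1 fun t => g (WithLp.toLp 2 (Function.update x i t)) :=
      (contDiff_infty.1 hg 1).comp ((PiLp.contDiff_toLp).comp (contDiff_update 1 x i))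
    have hsob := enorm_le_lintegral_enorm_add_enorm_deriv hsmooth (hx i)
    rw [Function.update_eq_self] at hsob
    refine hsob.trans (setLIntegral_mono' measurableSet_Icc fun t ht => ?_)
    rw [(hderiv t).deriv, pow_succ, mul_assoc, two_mul, mul_add]
    refine add_le_add (ih hg (fun u hu => hle u (by omega)) (hupdate t ht))
      (ih (contDiff_pderivE hg i) (fun u hu y => ?_) (hupdate t ht))
    exact wordDeriv_append u [i] g ▸ hle (u ++ [i]) (by simpa using hu) y

/-- The words of length at most `n` in the coordinates, i.e. the partial derivatives of order at
most `n`. -/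
noncomputable def wordsUpTo (d n : ℕ) : Finset (List (Fin d)) :=
  (List.finite_length_le (Fin d) n).toFinset

@[simp]
theorem mem_wordsUpTo {n : ℕ} {u : List (Fin d)} : u ∈ wordsUpTo d n ↔ u.length ≤ n := by
  simp [wordsUpTo]

/-- Lebesgue measure on the unit cube with lowest corner `x`, in coordinates. -/
noncomputable def unitCubeMeasure (x : Fin d → ℝ) : Measure (Fin d → ℝ) :=
  Measure.pi fun i => volume.restrict (Set.Icc (x i) (x i + 1))

instance (x : Fin d → ℝ) : IsProbabilityMeasure (unitCubeMeasure x) :=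
  have (i : Fin d) : IsProbabilityMeasure (volume.restrict (Set.Icc (x i) (x i + 1))) :=
    ⟨by simp⟩
  inferInstanceAs (IsProbabilityMeasure (Measure.pi _))

theorem unitCubeMeasure_eq_restrict (x : Fin d → ℝ) : unitCubeMeasure x =
    volume.restrict (Set.univ.pi fun i => Set.Icc (x i) (x i + 1)) := by
  rw [unitCubeMeasure, volume_pi, Measure.restrict_pi_pi]

theorem enorm_le_sum_lintegral_unitCube {g : EuclideanSpace ℝ (Fin d) → ℝ}
    (hg : ContDiff ℝ (⊤ : ℕ∞) g) (x : EuclideanSpace ℝ (Fin d)) :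
    ‖g x‖ₑ ≤ 2 ^ d * ∑ u ∈ wordsUpTo d d,
      ∫⁻ z, ‖wordDeriv u g (WithLp.toLp 2 z)‖ₑ ∂unitCubeMeasure x := by
  have hmeas (u : List (Fin d)) :
      Measurable fun z : Fin d → ℝ => ‖wordDeriv u g (WithLp.toLp 2 z)‖ₑ :=
    ((contDiff_wordDeriv hg u).continuous.comp (PiLp.continuous_toLp 2 _)).measurable.enorm
  have hmarg := enorm_le_lmarginal_of_enorm_wordDeriv_le (s := Finset.univ) (b := x) (x := x) hg
    (Finset.measurable_sum (wordsUpTo d d) fun u _ => hmeas u) (fun u hu z => ?_)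
    fun i => ⟨le_rfl, by simp⟩
  · rw [lmarginal_univ, lintegral_finsetSum _ fun u _ => hmeas u] at hmarg
    simpa [unitCubeMeasure] using hmarg
  · exact Finset.single_le_sum (f := fun u => ‖wordDeriv u g (WithLp.toLp 2 z)‖ₑ)
      (fun _ _ => zero_le) (by simpa using hu)

theorem lintegral_unitCube_le_eLpNorm {g : EuclideanSpace ℝ (Fin d) → ℝ} (hg : Continuous g)
    (x : Fin d → ℝ) :
    ∫⁻ z, ‖g (WithLp.toLp 2 z)‖ₑ ∂unitCubeMeasure x ≤ eLpNorm g 2 volume := by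
  have hcomp : Continuous (g ∘ WithLp.toLp 2) := hg.comp (PiLp.continuous_toLp 2 _)
  calc ∫⁻ z, ‖g (WithLp.toLp 2 z)‖ₑ ∂unitCubeMeasure x
      = eLpNorm (g ∘ WithLp.toLp 2) 1 (unitCubeMeasure x) := eLpNorm_one_eq_lintegral_enorm.symm
    _ ≤ eLpNorm (g ∘ WithLp.toLp 2) 2 (unitCubeMeasure x) :=
        eLpNorm_le_eLpNorm_of_exponent_le (by norm_num) hcomp.aestronglyMeasurable
    _ ≤ eLpNorm (g ∘ WithLp.toLp 2) 2 volume :=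
        eLpNorm_mono_measure _ (unitCubeMeasure_eq_restrict x ▸ Measure.restrict_le_self)
    _ = eLpNorm g 2 volume :=
        eLpNorm_comp_measurePreserving hg.aestronglyMeasurable (PiLp.volume_preserving_toLp (Fin d))

theorem japaneseBracket_le_on_unitCube (x : EuclideanSpace ℝ (Fin d)) :
    ∀ᵐ z ∂unitCubeMeasure x, japaneseBracket x ≤ (1 + d) * japaneseBracket (WithLp.toLp 2 z) := by
  rw [unitCubeMeasure_eq_restrict]
  filter_upwards [ae_restrict_mem (MeasurableSet.univ_pi fun i => measurableSet_Icc)] with z hz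
  refine (japaneseBracket_le_mul x (WithLp.toLp 2 z)).trans ?_
  have hdist : ‖x - WithLp.toLp 2 z‖ ^ 2 ≤ (d : ℝ) ^ 2 := by
    rw [EuclideanSpace.norm_sq_eq]
    calc ∑ i, ‖(x - WithLp.toLp 2 z) i‖ ^ 2 ≤ ∑ _i : Fin d, (1 : ℝ) := by
          gcongr with i
          rw [Real.norm_eq_abs, sq_abs, PiLp.sub_apply]
          obtain ⟨hlow, hup⟩ := hz i (Set.mem_univ i)
          nlinarith
      _ ≤ (d : ℝ) ^ 2 := by
          simpa using (by exact_mod_cast Nat.le_self_pow two_ne_zero d : (d : ℝ) ≤ (d : ℝ) ^ 2)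
  gcongr
  · exact (japaneseBracket_pos _).le
  · exact (pow_le_pow_iff_left₀ (norm_nonneg _) (by positivity) two_ne_zero).1 hdist

theorem enorm_japaneseBracket_pow_mul_lintegral_unitCube_le {g : EuclideanSpace ℝ (Fin d) → ℝ}
    (hg : Continuous g) (n : ℕ) (x : EuclideanSpace ℝ (Fin d)) :
    ‖japaneseBracket x ^ n‖ₑ * ∫⁻ z, ‖g (WithLp.toLp 2 z)‖ₑ ∂unitCubeMeasure x ≤
      ENNReal.ofReal ((1 + d) ^ n) * eLpNorm (fun x => japaneseBracket x ^ n * g x) 2 volume := by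
  have hcont : Continuous fun z => japaneseBracket z ^ n * g z :=
    (continuous_japaneseBracket.pow n).mul hg
  have hpos := japaneseBracket_pos x
  refine le_trans ?_ (mul_le_mul_right (lintegral_unitCube_le_eLpNorm hcont x) _)
  rw [← lintegral_const_mul' _ _ enorm_ne_top, ← lintegral_const_mul' _ _ ENNReal.ofReal_ne_top]
  refine lintegral_mono_ae ?_
  filter_upwards [japaneseBracket_le_on_unitCube x] with z hz
  rw [enorm_mul, ← mul_assoc]
  gcongr
  rw [← Real.enorm_of_nonneg (by positivity), ← enorm_mul, ← mul_pow,
    Real.enorm_of_nonneg (by positivity)]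
  exact (ENNReal.ofReal_le_ofReal (pow_le_pow_left₀ hpos.le hz n)).trans (Real.ofReal_le_enorm _)

theorem japaneseBracket_pow_mul_abs_le_of_eLpNorm_le {g : EuclideanSpace ℝ (Fin d) → ℝ}
    (hg : ContDiff ℝ (⊤ : ℕ∞) g) {n : ℕ} {M : ℝ} (hM : 0 ≤ M)
    (hL2 : ∀ u : List (Fin d), u.length ≤ d →
      eLpNorm (fun x => japaneseBracket x ^ n * wordDeriv u g x) 2 volume ≤ ENNReal.ofReal M)
    (x : EuclideanSpace ℝ (Fin d)) :
    japaneseBracket x ^ n * |g x| ≤ 2 ^ d * (wordsUpTo d d).card * (1 + d) ^ n * M := by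
  have hpos : 0 ≤ japaneseBracket x ^ n := pow_nonneg (japaneseBracket_pos x).le n
  refine (ENNReal.ofReal_le_ofReal_iff (by positivity)).1 ?_
  calc ENNReal.ofReal (japaneseBracket x ^ n * |g x|)
      = ‖japaneseBracket x ^ n‖ₑ * ‖g x‖ₑ := by
        rw [← enorm_mul, ← ofReal_norm, Real.norm_eq_abs, abs_mul,
          abs_of_nonneg hpos]
    _ ≤ ‖japaneseBracket x ^ n‖ₑ * (2 ^ d * ∑ u ∈ wordsUpTo d d,
          ∫⁻ z, ‖wordDeriv u g (WithLp.toLp 2 z)‖ₑ ∂unitCubeMeasure x) := by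
        gcongr
        exact enorm_le_sum_lintegral_unitCube hg x
    _ ≤ 2 ^ d * ∑ _u ∈ wordsUpTo d d, ENNReal.ofReal ((1 + d) ^ n) * ENNReal.ofReal M := by
        rw [mul_left_comm, Finset.mul_sum]
        refine mul_le_mul_right (Finset.sum_le_sum fun u hu => ?_) _
        exact (enorm_japaneseBracket_pow_mul_lintegral_unitCube_le
          (contDiff_wordDeriv hg u).continuous n x).trans
            (mul_le_mul_right (hL2 u (mem_wordsUpTo.1 hu)) _)
    _ = ENNReal.ofReal (2 ^ d * (wordsUpTo d d).card * (1 + d) ^ n * M) := by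
        rw [ENNReal.ofReal_mul (by positivity), ENNReal.ofReal_mul (by positivity)]
        simp [ENNReal.ofReal_mul, mul_assoc]

end Sobolev

section Factorials

theorem factorial_ceil_mul_le {δ : ℝ} (hδ0 : 0 ≤ δ) (hδ1 : δ ≤ 1) (m : ℕ) :
    (⌈δ * m⌉₊.factorial : ℝ) ≤ Real.exp (2 * m) * (m.factorial : ℝ) ^ δ := by
  rcases m.eq_zero_or_pos with rfl | hm
  · simp
  have hm1 : (1 : ℝ) ≤ m := by exact_mod_cast hm
  have hceil_le : ⌈δ * m⌉₊ ≤ m := Nat.ceil_le.2 (mul_le_of_le_one_left (by positivity) hδ1)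
  have hceil_lt : (⌈δ * m⌉₊ : ℝ) ≤ δ * m + 1 := (Nat.ceil_lt_add_one (by positivity)).le
  have hpow : (m : ℝ) ^ m ≤ Real.exp m * m.factorial :=
    (div_le_iff₀ (by positivity)).1 (Real.pow_div_factorial_le_exp (m : ℝ) (by positivity) m)
  calc (⌈δ * m⌉₊.factorial : ℝ) ≤ (m : ℝ) ^ ⌈δ * m⌉₊ := by
        exact_mod_cast (Nat.factorial_le_pow _).trans (Nat.pow_le_pow_left hceil_le _)
    _ ≤ (m : ℝ) ^ (δ * m + 1) := by
        rw [← Real.rpow_natCast]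
        exact Real.rpow_le_rpow_of_exponent_le hm1 hceil_lt
    _ = ((m : ℝ) ^ m) ^ δ * m := by
        rw [Real.rpow_add (by positivity), Real.rpow_one, mul_comm δ, Real.rpow_mul (by positivity),
          Real.rpow_natCast]
    _ ≤ (Real.exp m * m.factorial) ^ δ * Real.exp m := by
        gcongr
        linarith [Real.add_one_le_exp (m : ℝ)]
    _ = Real.exp m ^ δ * (m.factorial : ℝ) ^ δ * Real.exp m := by
        rw [Real.mul_rpow (by positivity) (by positivity)]
    _ ≤ Real.exp m * (m.factorial : ℝ) ^ δ * Real.exp m := by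
        gcongr
        exact Real.rpow_le_self_of_one_le (Real.one_le_exp (by positivity)) hδ1
    _ = Real.exp (2 * m) * (m.factorial : ℝ) ^ δ := by
        rw [two_mul, Real.exp_add]
        ring

theorem factorial_add_le {k m : ℕ} (h : k ≤ m) :
    (k + m).factorial ≤ (4 * k.factorial) ^ m * m.factorial := by
  rcases m.eq_zero_or_pos with rfl | hm
  · simp [Nat.le_zero.1 h]
  have hchoose : (k + m).choose m ≤ 4 ^ m :=
    calc (k + m).choose m ≤ 2 ^ (k + m) := Nat.choose_le_two_pow _ _
      _ ≤ 2 ^ (2 * m) := Nat.pow_le_pow_right two_pos (by omega)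
      _ = 4 ^ m := by rw [pow_mul]; norm_num
  calc (k + m).factorial = (k + m).choose m * k.factorial * m.factorial :=
        (Nat.add_choose_mul_factorial_mul_factorial k m).symm
    _ ≤ 4 ^ m * k.factorial ^ m * m.factorial := by
        gcongr
        exact Nat.le_self_pow hm.ne' _
    _ = (4 * k.factorial) ^ m * m.factorial := by rw [mul_pow]

theorem factorial_ceil_mul_rpow_le {δ ν : ℝ} (hδ0 : 0 ≤ δ) (hδ1 : δ ≤ 1) (hν : 0 ≤ ν) (m : ℕ) :
    (⌈δ * m⌉₊.factorial : ℝ) ^ ν ≤ Real.exp (2 * ν) ^ m * (m.factorial : ℝ) ^ (δ * ν) :=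
  calc (⌈δ * m⌉₊.factorial : ℝ) ^ ν ≤ (Real.exp (2 * m) * (m.factorial : ℝ) ^ δ) ^ ν := by
        gcongr
        exact factorial_ceil_mul_le hδ0 hδ1 m
    _ = Real.exp (2 * ν) ^ m * (m.factorial : ℝ) ^ (δ * ν) := by
        rw [Real.mul_rpow (by positivity) (by positivity), ← Real.rpow_mul (by positivity),
          ← Real.exp_mul, ← Real.exp_nat_mul]
        ring_nf

theorem factorial_add_rpow_le {k m : ℕ} (h : k ≤ m) {μ : ℝ} (hμ0 : 0 ≤ μ) (hμ1 : μ ≤ 1) :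
    ((k + m).factorial : ℝ) ^ μ ≤ (4 * k.factorial) ^ m * (m.factorial : ℝ) ^ μ := by
  have hk : (1 : ℝ) ≤ k.factorial := by exact_mod_cast k.factorial_pos
  calc ((k + m).factorial : ℝ) ^ μ ≤ ((4 * k.factorial) ^ m * m.factorial : ℝ) ^ μ := by
        gcongr
        exact_mod_cast factorial_add_le h
    _ = ((4 * k.factorial : ℝ) ^ m) ^ μ * (m.factorial : ℝ) ^ μ :=
        Real.mul_rpow (by positivity) (by positivity)
    _ ≤ (4 * k.factorial) ^ m * (m.factorial : ℝ) ^ μ := by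
        gcongr
        exact Real.rpow_le_self_of_one_le (one_le_pow₀ (by linarith)) hμ1

end Factorials

section LocalScale

variable {E : Type*} [SeminormedAddCommGroup E] {x z : E} {r R r₀ η δ : ℝ}

theorem japaneseBracket_le_of_mem_ball (hη : η < 1) (hr : r₀ ≤ ‖x‖ → r ≤ η * ‖x‖)
    (hz : z ∈ Metric.ball x r) :
    japaneseBracket x ≤ (japaneseBracket r₀ + (1 - η)⁻¹) * japaneseBracket z := by
  have hη0 : 0 < 1 - η := by linarith
  have hz1 := one_le_japaneseBracket z
  rcases lt_or_ge ‖x‖ r₀ with hx | hx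
  · have hle : japaneseBracket x ≤ japaneseBracket r₀ := by
      unfold japaneseBracket
      gcongr
      exact hx.le.trans (Real.le_norm_self r₀)
    nlinarith [japaneseBracket_pos r₀, inv_pos.2 hη0]
  · have hxz : (1 - η) * ‖x‖ ≤ ‖z‖ := by
      have := norm_le_norm_add_norm_sub' x z
      rw [← dist_eq_norm, dist_comm] at this
      linarith [hr hx, Metric.mem_ball.1 hz]
    have hη1 : 0 < η := by
      have := (Metric.pos_of_mem_ball hz).trans_le (hr hx)
      exact pos_of_mul_pos_left this (norm_nonneg x)
    have hscaled : (1 - η) * japaneseBracket x ≤ japaneseBracket z := by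
      refine Real.le_sqrt_of_sq_le ?_
      rw [mul_pow, sq_japaneseBracket]
      nlinarith [pow_le_pow_left₀ (by positivity) hxz 2]
    calc japaneseBracket x ≤ (1 - η)⁻¹ * japaneseBracket z := by
          rwa [inv_mul_eq_div, le_div_iff₀' hη0]
      _ ≤ (japaneseBracket r₀ + (1 - η)⁻¹) * japaneseBracket z := by
          gcongr
          linarith [japaneseBracket_pos r₀]

theorem radius_pow_le (hδ0 : 0 ≤ δ) (hδ1 : δ ≤ 1) (hR : 0 ≤ R) (hη : η < 1)
    (hrR : r ≤ R * japaneseBracket x ^ δ) (hrη : r₀ ≤ ‖x‖ → r ≤ η * ‖x‖)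
    (hz : z ∈ Metric.ball x r) (m : ℕ) :
    r ^ m ≤ (R * (japaneseBracket r₀ + (1 - η)⁻¹)) ^ m * japaneseBracket z ^ ⌈δ * m⌉₊ := by
  set C := japaneseBracket r₀ + (1 - η)⁻¹
  have hx0 := japaneseBracket_pos x
  have hz0 := japaneseBracket_pos z
  have hC : 1 ≤ C := by
    linarith [one_le_japaneseBracket r₀, inv_pos.2 (sub_pos.2 hη)]
  have hscale : r ≤ R * C * japaneseBracket z ^ δ :=
    calc r ≤ R * (C * japaneseBracket z) ^ δ := by
          refine hrR.trans ?_
          gcongr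
          exact japaneseBracket_le_of_mem_ball hη hrη hz
      _ = R * (C ^ δ * japaneseBracket z ^ δ) := by rw [Real.mul_rpow (by positivity) hz0.le]
      _ ≤ R * (C * japaneseBracket z ^ δ) := by
          gcongr
          exact Real.rpow_le_self_of_one_le hC hδ1
      _ = R * C * japaneseBracket z ^ δ := (mul_assoc _ _ _).symm
  have hr := Metric.pos_of_mem_ball hz
  calc r ^ m ≤ (R * C * japaneseBracket z ^ δ) ^ m := by gcongr
    _ = (R * C) ^ m * japaneseBracket z ^ (δ * m) := by
        rw [mul_pow, Real.rpow_mul hz0.le, Real.rpow_natCast]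
    _ ≤ (R * C) ^ m * japaneseBracket z ^ ⌈δ * m⌉₊ := by
        gcongr
        rw [← Real.rpow_natCast]
        exact Real.rpow_le_rpow_of_exponent_le (one_le_japaneseBracket z) (Nat.le_ceil _)

end LocalScale

section GelfandShilov

variable {d : ℕ} {f : EuclideanSpace ℝ (Fin d) → ℝ} {D₁ D₂ ν μ : ℝ}

/-- The quantitative Gelfand–Shilov condition: `⟨x⟩ⁿ ∂^β f` is bounded in `L²` by
`D₁ D₂^(n+|β|) (n!)^ν (|β|!)^μ` for all `n` and `β`. -/
def HasGelfandShilovBounds (f : EuclideanSpace ℝ (Fin d) → ℝ) (D₁ D₂ ν μ : ℝ) : Prop :=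
  ∀ (n : ℕ) (β : Fin d → ℕ),
    eLpNorm (fun x => japaneseBracket x ^ n * mderiv β f x) 2 volume ≤
      ENNReal.ofReal (D₁ * D₂ ^ (n + ∑ i, β i) *
        (n.factorial : ℝ) ^ ν * ((∑ i, β i).factorial : ℝ) ^ μ)

namespace HasGelfandShilovBounds

theorem eLpNorm_wordDeriv_le (h : HasGelfandShilovBounds f D₁ D₂ ν μ)
    (hf : ContDiff ℝ (⊤ : ℕ∞) f) (n : ℕ) (w : List (Fin d)) :
    eLpNorm (fun x => japaneseBracket x ^ n * wordDeriv w f x) 2 volume ≤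
      ENNReal.ofReal (D₁ * D₂ ^ (n + w.length) *
        (n.factorial : ℝ) ^ ν * (w.length.factorial : ℝ) ^ μ) := by
  simpa only [wordDeriv_eq_mderiv_count hf, sum_count_eq_length] using h n fun i => w.count i

theorem japaneseBracket_pow_mul_abs_wordDeriv_le (h : HasGelfandShilovBounds f D₁ D₂ ν μ)
    (hf : ContDiff ℝ (⊤ : ℕ∞) f) (hD₁ : 0 ≤ D₁) (hD₂ : 1 ≤ D₂) (hμ : 0 ≤ μ) (n : ℕ)
    (w : List (Fin d)) (x : EuclideanSpace ℝ (Fin d)) :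
    japaneseBracket x ^ n * |wordDeriv w f x| ≤ 2 ^ d * (wordsUpTo d d).card * (1 + d) ^ n *
      (D₁ * D₂ ^ (n + (d + w.length)) *
        (n.factorial : ℝ) ^ ν * ((d + w.length).factorial : ℝ) ^ μ) := by
  refine japaneseBracket_pow_mul_abs_le_of_eLpNorm_le (contDiff_wordDeriv hf w)
    (by positivity) (fun u hu => ?_) x
  simp only [← wordDeriv_append]
  refine (h.eLpNorm_wordDeriv_le hf n (u ++ w)).trans (ENNReal.ofReal_le_ofReal ?_)
  rw [List.length_append]
  gcongr

theorem japaneseBracket_pow_ceil_mul_abs_wordDeriv_le (h : HasGelfandShilovBounds f D₁ D₂ ν μ)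
    (hf : ContDiff ℝ (⊤ : ℕ∞) f) (hD₁ : 0 ≤ D₁) (hD₂ : 1 ≤ D₂) (hν : 0 ≤ ν) (hμ0 : 0 ≤ μ)
    (hμ1 : μ ≤ 1) {δ : ℝ} (hδ0 : 0 ≤ δ) (hδ1 : δ ≤ 1) {w : List (Fin d)} (hw : w ≠ [])
    (hdw : d ≤ w.length) (x : EuclideanSpace ℝ (Fin d)) :
    japaneseBracket x ^ ⌈δ * w.length⌉₊ * |wordDeriv w f x| ≤
      D₁ * (2 ^ d * (wordsUpTo d d).card * (1 + d) * Real.exp (2 * ν) * (4 * d.factorial) *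
        D₂ ^ 3) ^ w.length * (w.length.factorial : ℝ) ^ (δ * ν + μ) := by
  set W : ℝ := 2 ^ d * (wordsUpTo d d).card
  set m := w.length
  set n := ⌈δ * m⌉₊
  have hm : m ≠ 0 := by simpa [m] using hw
  have hn : n ≤ m := Nat.ceil_le.2 (mul_le_of_le_one_left (by positivity) hδ1)
  have hW : 1 ≤ W := by
    have hcard : 1 ≤ (wordsUpTo d d).card :=
      Finset.card_pos.2 ⟨[], mem_wordsUpTo.2 (Nat.zero_le _)⟩
    exact one_le_mul_of_one_le_of_one_le (one_le_pow₀ one_le_two) (by exact_mod_cast hcard)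
  have hweight : (1 + d : ℝ) ^ n ≤ (1 + d) ^ m :=
    pow_le_pow_right₀ (by linarith [(Nat.cast_nonneg d : (0 : ℝ) ≤ d)]) hn
  have hD₂pow : D₂ ^ (n + (d + m)) ≤ (D₂ ^ 3) ^ m := by
    rw [← pow_mul]
    exact pow_le_pow_right₀ hD₂ (by omega)
  calc japaneseBracket x ^ n * |wordDeriv w f x|
      ≤ W * (1 + d) ^ n * (D₁ * D₂ ^ (n + (d + m)) * (n.factorial : ℝ) ^ ν *
          ((d + m).factorial : ℝ) ^ μ) :=
        h.japaneseBracket_pow_mul_abs_wordDeriv_le hf hD₁ hD₂ hμ0 n w x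
    _ ≤ W ^ m * (1 + d) ^ m * (D₁ * (D₂ ^ 3) ^ m *
          (Real.exp (2 * ν) ^ m * (m.factorial : ℝ) ^ (δ * ν)) *
          ((4 * d.factorial) ^ m * (m.factorial : ℝ) ^ μ)) := by
        gcongr
        · exact le_self_pow₀ hW hm
        · exact factorial_ceil_mul_rpow_le hδ0 hδ1 hν m
        · exact factorial_add_rpow_le hdw hμ0 hμ1
    _ = _ := by
        rw [Real.rpow_add (by positivity)]
        simp only [mul_pow]
        ring

theorem exists_radius_pow_mul_abs_wordDeriv_le (d : ℕ) {ν μ δ R η : ℝ} (r₀ : ℝ)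
    (hν : 0 ≤ ν) (hμ0 : 0 ≤ μ) (hμ1 : μ ≤ 1) (hδ0 : 0 ≤ δ) (hδ1 : δ ≤ 1) (hR : 0 ≤ R)
    (hη : η < 1) :
    ∃ A : ℝ, 0 ≤ A ∧ ∀ {f : EuclideanSpace ℝ (Fin d) → ℝ} {D₁ D₂ : ℝ},
      HasGelfandShilovBounds f D₁ D₂ ν μ → ContDiff ℝ (⊤ : ℕ∞) f → 0 ≤ D₁ → 1 ≤ D₂ →
      ∀ {x z : EuclideanSpace ℝ (Fin d)} {r : ℝ}, r ≤ R * japaneseBracket x ^ δ →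
        (r₀ ≤ ‖x‖ → r ≤ η * ‖x‖) → z ∈ Metric.ball x r →
      ∀ {w : List (Fin d)}, w ≠ [] → d ≤ w.length →
        r ^ w.length * |wordDeriv w f z| ≤
          D₁ * (A * D₂ ^ 3) ^ w.length * (w.length.factorial : ℝ) ^ (δ * ν + μ) := by
  set C := japaneseBracket r₀ + (1 - η)⁻¹
  have hC : 0 ≤ C := add_nonneg (japaneseBracket_pos r₀).le (inv_nonneg.2 (by linarith))
  refine ⟨R * C * (2 ^ d * (wordsUpTo d d).card * (1 + d) * Real.exp (2 * ν) *
    (4 * d.factorial)), by positivity,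
    fun {f D₁ D₂} h hf hD₁ hD₂ {x z r} hrR hrη hz {w} hw hdw => ?_⟩
  set m := w.length
  calc r ^ m * |wordDeriv w f z|
      ≤ (R * C) ^ m * japaneseBracket z ^ ⌈δ * m⌉₊ * |wordDeriv w f z| := by
        gcongr
        exact radius_pow_le hδ0 hδ1 hR hη hrR hrη hz m
    _ = (R * C) ^ m * (japaneseBracket z ^ ⌈δ * m⌉₊ * |wordDeriv w f z|) := mul_assoc _ _ _
    _ ≤ (R * C) ^ m * _ := mul_le_mul_of_nonneg_left
        (h.japaneseBracket_pow_ceil_mul_abs_wordDeriv_le hf hD₁ hD₂ hν hμ0 hμ1 hδ0 hδ1 hw hdw z)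
        (by positivity)
    _ = _ := by
        simp only [mul_pow]
        ring

end HasGelfandShilovBounds
end GelfandShilov

section Averages

theorem half_measure_univ_le_measure_le_two_mul_laverage {α : Type*} [MeasurableSpace α]
    {μ : Measure α} [IsFiniteMeasure μ] {g : α → ENNReal} (hg : AEMeasurable g μ) :
    μ Set.univ / 2 ≤ μ {x | g x ≤ 2 * ⨍⁻ y, g y ∂μ} := by
  set A := ⨍⁻ y, g y ∂μ
  have hint : ∫⁻ y, g y ∂μ = A * μ Set.univ := by rw [mul_comm, measure_mul_laverage]
  have hbad : μ {x | g x ≤ 2 * A}ᶜ ≤ μ Set.univ / 2 := by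
    rcases eq_or_ne A 0 with hA0 | hA0
    · have hzero : g =ᵐ[μ] 0 := (lintegral_eq_zero_iff' hg).1 (by rw [hint, hA0, zero_mul])
      have hnull : μ {x | g x ≤ 2 * A}ᶜ = 0 := by
        simpa [hA0, Filter.EventuallyEq, ae_iff] using! hzero
      exact hnull.le.trans zero_le
    rcases eq_or_ne A ⊤ with hA | hA
    · simp [hA]
    have hmarkov : 2 * A * μ {x | g x ≤ 2 * A}ᶜ ≤ A * μ Set.univ := by
      rw [← hint]
      refine le_trans ?_ (mul_meas_ge_le_lintegral₀ hg (2 * A))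
      gcongr
      exact fun x hx => (not_le.1 (Set.notMem_ofPred_iff.1 hx)).le
    rw [ENNReal.le_div_iff_mul_le (by simp) (by simp)]
    refine (ENNReal.mul_le_mul_iff_right hA0 hA).1 (hmarkov.trans' (le_of_eq ?_))
    ring
  have hsplit : μ Set.univ / 2 + μ Set.univ / 2 ≤ μ {x | g x ≤ 2 * A} + μ Set.univ / 2 :=
    calc μ Set.univ / 2 + μ Set.univ / 2 = μ ({x | g x ≤ 2 * A} ∪ {x | g x ≤ 2 * A}ᶜ) := by
          rw [ENNReal.add_halves, Set.union_compl_self]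
      _ ≤ μ {x | g x ≤ 2 * A} + μ {x | g x ≤ 2 * A}ᶜ := measure_union_le _ _
      _ ≤ μ {x | g x ≤ 2 * A} + μ Set.univ / 2 := by gcongr
  exact (ENNReal.add_le_add_iff_right (by finiteness)).1 hsplit

theorem half_measure_le_measure_inter_le_two_mul_setLAverage {α : Type*} [MeasurableSpace α]
    {μ : Measure α} {s : Set α} {g : α → ENNReal} (hs : MeasurableSet s) (hμs : μ s ≠ ⊤)
    (hg : AEMeasurable g (μ.restrict s)) :
    μ s / 2 ≤ μ (s ∩ {x | g x ≤ 2 * ⨍⁻ y in s, g y ∂μ}) := by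
  have : IsFiniteMeasure (μ.restrict s) := isFiniteMeasure_restrict.2 hμs
  simpa [Measure.restrict_apply' hs, Set.inter_comm] using
    half_measure_univ_le_measure_le_two_mul_laverage hg

theorem enorm_sq_le_of_abs_le_add_mul_sqrt {t Q N : ℝ} {A : ENNReal} (hA : A ≠ ⊤)
    (h : |t| ≤ Q + N * √(2 * A.toReal)) :
    ‖t‖ₑ ^ 2 ≤ ENNReal.ofReal (2 * Q ^ 2) + ENNReal.ofReal (4 * N ^ 2) * A :=
  calc ‖t‖ₑ ^ 2 = ENNReal.ofReal (|t| ^ 2) := by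
        rw [Real.enorm_eq_ofReal_abs, ENNReal.ofReal_pow (abs_nonneg _)]
    _ ≤ ENNReal.ofReal (2 * (Q ^ 2 + (N * √(2 * A.toReal)) ^ 2)) :=
        ENNReal.ofReal_le_ofReal ((pow_le_pow_left₀ (abs_nonneg t) h 2).trans add_sq_le)
    _ = ENNReal.ofReal (2 * Q ^ 2 + 4 * N ^ 2 * A.toReal) := by
        rw [mul_pow, Real.sq_sqrt (by positivity)]
        ring_nf
    _ = ENNReal.ofReal (2 * Q ^ 2) + ENNReal.ofReal (4 * N ^ 2) * A := by
        rw [ENNReal.ofReal_add (by positivity) (by positivity),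
          ENNReal.ofReal_mul (q := A.toReal) (by positivity), ENNReal.ofReal_toReal hA]

end Averages

section Balls

variable {d : ℕ} {f : EuclideanSpace ℝ (Fin d) → ℝ} {x : EuclideanSpace ℝ (Fin d)} {r γ B : ℝ}
  {U : Set (EuclideanSpace ℝ (Fin d))} {m : ℕ}

theorem enorm_sq_le_laverage_of_dense (hf : ContDiff ℝ (⊤ : ℕ∞) f) (hγ : 0 < γ)
    (hU : MeasurableSet U) (hUball : U ⊆ Metric.ball x r)
    (hdens : ENNReal.ofReal γ * volume (Metric.ball x r) ≤ volume U) (hm : 1 ≤ m) (hB0 : 0 ≤ B)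
    (hB : ∀ w : List (Fin d), w.length = m → ∀ z ∈ Metric.ball x r,
      r ^ m * |wordDeriv w f z| ≤ B) {y : EuclideanSpace ℝ (Fin d)} (hy : y ∈ Metric.ball x r) :
    ‖f y‖ₑ ^ 2 ≤ ENNReal.ofReal (2 * ((4 * d) ^ m * B / m.factorial) ^ 2) +
      ENNReal.ofReal (4 * (m * (4 ^ (d + 1) * m / (γ / 2)) ^ m) ^ 2) *
        ⨍⁻ z in U, ‖f z‖ₑ ^ 2 ∂volume := by
  set A := ⨍⁻ z in U, ‖f z‖ₑ ^ 2 ∂volume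
  set Q : ℝ := (4 * d) ^ m * B / m.factorial
  set N : ℝ := m * (4 ^ (d + 1) * m / (γ / 2)) ^ m
  have hN : 0 < N := by positivity
  rcases eq_or_ne A ⊤ with hA | hA
  · rw [hA, ENNReal.mul_top (by simpa using hN.ne'), add_top]
    exact le_top
  have hr : 0 < r := Metric.pos_of_mem_ball hy
  have hfmeas : Measurable fun z => ‖f z‖ₑ ^ 2 := hf.continuous.measurable.enorm.pow_const 2
  set W := U ∩ {z | ‖f z‖ₑ ^ 2 ≤ 2 * A}
  have hW : MeasurableSet W := hU.inter (measurableSet_le hfmeas measurable_const)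
  have hdensW : ENNReal.ofReal (γ / 2) * volume (Metric.ball x r) ≤ volume W :=
    calc ENNReal.ofReal (γ / 2) * volume (Metric.ball x r)
        = ENNReal.ofReal γ * volume (Metric.ball x r) / 2 := by
          rw [ENNReal.ofReal_div_of_pos two_pos, ENNReal.ofReal_ofNat, ENNReal.div_eq_inv_mul,
            ENNReal.div_eq_inv_mul, mul_assoc]
      _ ≤ volume U / 2 := by gcongr
      _ ≤ volume W := half_measure_le_measure_inter_le_two_mul_setLAverage hU
          ((measure_mono hUball).trans_lt measure_ball_lt_top).ne hfmeas.aemeasurable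
  have hS : ∀ z ∈ W, |f z| ≤ √(2 * A.toReal) := fun z hz =>
    Real.abs_le_sqrt (by simpa using ENNReal.toReal_mono (by finiteness) hz.2)
  refine enorm_sq_le_of_abs_le_add_mul_sqrt hA ?_
  convert abs_le_of_abs_le_on_dense_subset hf (half_pos hγ) hW
    (Set.inter_subset_left.trans hUball) hdensW hS hm (by positivity)
    (fun w hw z hz => (le_div_iff₀' (by positivity)).2 (hB w hw z hz)) hy using 2
  simp only [Q, mul_pow]
  field_simp

theorem lintegral_ball_le_of_dense (hf : ContDiff ℝ (⊤ : ℕ∞) f) (hγ : 0 < γ)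
    (hU : MeasurableSet U) (hUball : U ⊆ Metric.ball x r)
    (hdens : ENNReal.ofReal γ * volume (Metric.ball x r) ≤ volume U) (hm : 1 ≤ m) (hB0 : 0 ≤ B)
    (hB : ∀ w : List (Fin d), w.length = m → ∀ z ∈ Metric.ball x r,
      r ^ m * |wordDeriv w f z| ≤ B) :
    ∫⁻ y in Metric.ball x r, ‖f y‖ₑ ^ 2 ≤
      ENNReal.ofReal (4 * (m * (4 ^ (d + 1) * m / (γ / 2)) ^ m) ^ 2 / γ) *
          (∫⁻ y in U, ‖f y‖ₑ ^ 2) +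
        ENNReal.ofReal (2 * ((4 * d) ^ m * B / m.factorial) ^ 2) * volume (Metric.ball x r) := by
  set A := ⨍⁻ z in U, ‖f z‖ₑ ^ 2 ∂volume
  set Q : ℝ := (4 * d) ^ m * B / m.factorial
  set N : ℝ := m * (4 ^ (d + 1) * m / (γ / 2)) ^ m
  have hUfin : volume U ≠ ⊤ := ((measure_mono hUball).trans_lt measure_ball_lt_top).ne
  have hball : volume (Metric.ball x r) ≤ ENNReal.ofReal γ⁻¹ * volume U := by
    rwa [ENNReal.ofReal_inv_of_pos hγ, mul_comm, ← div_eq_mul_inv,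
      ENNReal.le_div_iff_mul_le (by simp [hγ]) (by simp), mul_comm]
  calc ∫⁻ y in Metric.ball x r, ‖f y‖ₑ ^ 2
      ≤ ∫⁻ _ in Metric.ball x r, (ENNReal.ofReal (2 * Q ^ 2) + ENNReal.ofReal (4 * N ^ 2) * A) :=
        setLIntegral_mono measurable_const fun y hy =>
          enorm_sq_le_laverage_of_dense hf hγ hU hUball hdens hm hB0 hB hy
    _ = ENNReal.ofReal (4 * N ^ 2) * A * volume (Metric.ball x r) +
          ENNReal.ofReal (2 * Q ^ 2) * volume (Metric.ball x r) := by
        rw [setLIntegral_const]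
        ring
    _ ≤ ENNReal.ofReal (4 * N ^ 2) * A * (ENNReal.ofReal γ⁻¹ * volume U) +
          ENNReal.ofReal (2 * Q ^ 2) * volume (Metric.ball x r) := by gcongr
    _ = ENNReal.ofReal (4 * N ^ 2 / γ) * (∫⁻ y in U, ‖f y‖ₑ ^ 2) +
          ENNReal.ofReal (2 * Q ^ 2) * volume (Metric.ball x r) := by
        rw [← measure_mul_setLAverage _ hUfin, div_eq_mul_inv,
          ENNReal.ofReal_mul (q := γ⁻¹) (by positivity)]
        ring

end Balls

section Covering

theorem measure_le_multiplicity_mul_measure {E : Type*} [NormedAddCommGroup E] [NormedSpace ℝ E]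
    [FiniteDimensional ℝ E] [MeasurableSpace E] [OpensMeasurableSpace E] {μ κ : Measure E}
    {A U : Set E} {ρ : E → ℝ} {b : ℝ} (hρ : ∀ x ∈ A, 0 < ρ x) (hρb : ∀ x ∈ A, ρ x ≤ b)
    (hU : ∀ x ∈ A, Metric.ball x (ρ x) ⊆ U)
    (h : ∀ x ∈ A, μ (Metric.ball x (ρ x)) ≤ κ (Metric.ball x (ρ x))) :
    μ A ≤ Besicovitch.multiplicity E * κ U := by
  let q : Besicovitch.BallPackage A E :=
    { c := (↑)
      r := fun x => ρ x
      rpos := fun x => hρ x x.2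
      r_bound := b
      r_le := fun x => hρb x x.2 }
  obtain ⟨s, hs, hcover⟩ := Besicovitch.exist_disjoint_covering_families
    (Besicovitch.one_lt_goodτ E) (Besicovitch.isEmpty_satelliteConfig_multiplicity E) q
  let V : A → Set E := fun x => Metric.ball (x : E) (ρ x)
  have hdisj (i) : (s i).PairwiseDisjoint V := (hs i).mono fun _ => Metric.ball_subset_closedBall
  have hcount (i) : (s i).Countable := by
    have := FiniteDimensional.proper_real E
    exact (hdisj i).countable_of_isOpen (fun _ _ => Metric.isOpen_ball)
      fun x _ => Metric.nonempty_ball.2 (hρ x x.2)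
  have hfamily (i) : μ (⋃ x ∈ s i, V x) ≤ κ U :=
    calc μ (⋃ x ∈ s i, V x) ≤ ∑' x : s i, μ (V x) := measure_biUnion_le _ (hcount i) _
      _ ≤ ∑' x : s i, κ (V x) := ENNReal.tsum_le_tsum fun x => h x x.1.2
      _ = κ (⋃ x ∈ s i, V x) :=
          (measure_biUnion (hcount i) (hdisj i) fun _ _ => measurableSet_ball).symm
      _ ≤ κ U := measure_mono (Set.iUnion₂_subset fun x _ => hU x x.2)
  have hA : A ⊆ ⋃ i, ⋃ x ∈ s i, V x := fun x hx => hcover ⟨⟨x, hx⟩, rfl⟩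
  calc μ A ≤ ∑ i, μ (⋃ x ∈ s i, V x) := (measure_mono hA).trans (measure_iUnion_fintype_le _ _)
    _ ≤ ∑ _i : Fin (Besicovitch.multiplicity E), κ U := Finset.sum_le_sum fun i _ => hfamily i
    _ = Besicovitch.multiplicity E * κ U := by simp

theorem setLIntegral_le_multiplicity_mul {E : Type*} [NormedAddCommGroup E] [NormedSpace ℝ E]
    [FiniteDimensional ℝ E] [MeasurableSpace E] [OpensMeasurableSpace E] {μ : Measure E}
    [SFinite μ] {g : E → ENNReal} {P Q : ENNReal}
    {A U ω : Set E} {ρ : E → ℝ} {b : ℝ} (hρ : ∀ x ∈ A, 0 < ρ x) (hρb : ∀ x ∈ A, ρ x ≤ b)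
    (hU : ∀ x ∈ A, Metric.ball x (ρ x) ⊆ U)
    (h : ∀ x ∈ A, ∫⁻ y in Metric.ball x (ρ x), g y ∂μ ≤
      P * ∫⁻ y in Metric.ball x (ρ x) ∩ ω, g y ∂μ + Q * μ (Metric.ball x (ρ x))) :
    ∫⁻ y in A, g y ∂μ ≤ Besicovitch.multiplicity E * (P * ∫⁻ y in ω, g y ∂μ + Q * μ U) := by
  have hcompare := measure_le_multiplicity_mul_measure (μ := μ.withDensity g)
    (κ := P • (μ.restrict ω).withDensity g + Q • μ) hρ hρb hU fun x hx => by
      simpa [withDensity_apply _ measurableSet_ball, Measure.restrict_restrict measurableSet_ball]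
        using h x hx
  rw [withDensity_apply'] at hcompare
  refine hcompare.trans ?_
  simp only [Measure.add_apply, Measure.smul_apply, smul_eq_mul]
  gcongr
  rw [withDensity_apply']
  exact lintegral_mono' (Measure.restrict_le_self) le_rfl

end Covering

section Tail

theorem sq_eLpNorm_two_eq_lintegral {α F : Type*} [MeasurableSpace α] [NormedAddCommGroup F]
    (f : α → F) (μ : Measure α) : eLpNorm f 2 μ ^ 2 = ∫⁻ x, ‖f x‖ₑ ^ 2 ∂μ := by
  simpa using eLpNorm_nnreal_pow_eq_lintegral (f := f) (μ := μ) (p := 2) two_ne_zero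

theorem mderiv_zero {d : ℕ} (f : EuclideanSpace ℝ (Fin d) → ℝ) : mderiv 0 f = f := by
  unfold mderiv
  exact List.foldr_fixed' (fun _ => rfl) _

theorem setLIntegral_enorm_sq_compl_closedBall_le {E : Type*} [NormedAddCommGroup E]
    [MeasurableSpace E] [OpensMeasurableSpace E] {μ : Measure E} {f : E → ℝ} {M r : ℝ}
    (hr : 0 < r)
    (h : eLpNorm (fun x => japaneseBracket x * f x) 2 μ ≤ ENNReal.ofReal M) :
    ∫⁻ x in (Metric.closedBall 0 r)ᶜ, ‖f x‖ₑ ^ 2 ∂μ ≤ ENNReal.ofReal (M / r) ^ 2 := by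
  have hpoint : ∀ x ∈ (Metric.closedBall (0 : E) r)ᶜ,
      ‖f x‖ₑ ^ 2 ≤ (ENNReal.ofReal r)⁻¹ ^ 2 * ‖japaneseBracket x * f x‖ₑ ^ 2 := fun x hx => by
    have hrx : ENNReal.ofReal r ≤ ‖japaneseBracket x‖ₑ := by
      rw [Real.enorm_of_nonneg (japaneseBracket_pos x).le]
      refine ENNReal.ofReal_le_ofReal (le_trans ?_ (norm_le_japaneseBracket x))
      simpa using (not_le.1 fun hle => hx (mem_closedBall_zero_iff.2 hle)).le
    rw [enorm_mul, ← mul_pow, ← mul_assoc]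
    gcongr
    refine le_mul_of_one_le_left' ?_
    rw [mul_comm, ← div_eq_mul_inv]
    rwa [ENNReal.le_div_iff_mul_le (by simp [hr]) (by simp), one_mul]
  calc ∫⁻ x in (Metric.closedBall 0 r)ᶜ, ‖f x‖ₑ ^ 2 ∂μ
      ≤ ∫⁻ x in (Metric.closedBall 0 r)ᶜ,
          (ENNReal.ofReal r)⁻¹ ^ 2 * ‖japaneseBracket x * f x‖ₑ ^ 2 ∂μ :=
        setLIntegral_mono' Metric.isClosed_closedBall.measurableSet.compl hpoint
    _ ≤ ∫⁻ x, (ENNReal.ofReal r)⁻¹ ^ 2 * ‖japaneseBracket x * f x‖ₑ ^ 2 ∂μ :=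
        setLIntegral_le_lintegral _ _
    _ = (ENNReal.ofReal r)⁻¹ ^ 2 * eLpNorm (fun x => japaneseBracket x * f x) 2 μ ^ 2 := by
        rw [lintegral_const_mul' _ _ (by finiteness [hr.ne']), sq_eLpNorm_two_eq_lintegral]
    _ ≤ (ENNReal.ofReal r)⁻¹ ^ 2 * ENNReal.ofReal M ^ 2 := by gcongr
    _ = ENNReal.ofReal (M / r) ^ 2 := by
        rw [← mul_pow, ENNReal.ofReal_div_of_pos hr, ENNReal.div_eq_inv_mul]

theorem HasGelfandShilovBounds.lintegral_compl_closedBall_le {d : ℕ}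
    {f : EuclideanSpace ℝ (Fin d) → ℝ} {D₁ D₂ ν μ r : ℝ} (h : HasGelfandShilovBounds f D₁ D₂ ν μ)
    (hr : 0 < r) :
    ∫⁻ x in (Metric.closedBall 0 r)ᶜ, ‖f x‖ₑ ^ 2 ≤ ENNReal.ofReal (D₁ * D₂ / r) ^ 2 :=
  setLIntegral_enorm_sq_compl_closedBall_le hr (by simpa [mderiv_zero] using h 1 0)

end Tail

section Parameters

theorem pow_le_factorial_rpow {Y σ : ℝ} (hY : 0 ≤ Y) (hσ : 0 < σ) {m : ℕ}
    (h : Real.exp 1 * Y ^ (1 / σ) ≤ m) : Y ^ m ≤ (m.factorial : ℝ) ^ σ := by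
  have hstirling : (m / Real.exp 1) ^ m ≤ (m.factorial : ℝ) := by
    rw [div_pow, div_le_comm₀ (by positivity) (by positivity), ← Real.exp_nat_mul, mul_one]
    exact Real.pow_div_factorial_le_exp (m : ℝ) (by positivity) m
  have hbase : Y ≤ (m / Real.exp 1) ^ σ := by
    rw [← Real.rpow_inv_le_iff_of_pos hY (by positivity) hσ, ← one_div,
      le_div_iff₀' (Real.exp_pos 1)]
    exact h
  calc Y ^ m ≤ ((m / Real.exp 1) ^ σ) ^ m := by gcongr
    _ = ((m / Real.exp 1) ^ m) ^ σ := Real.rpow_pow_comm (by positivity) _ _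
    _ ≤ (m.factorial : ℝ) ^ σ := by gcongr

theorem pow_mul_factorial_rpow_div_factorial_le {Y s q : ℝ} (hY : 0 ≤ Y) (hs : s < 1) {m : ℕ}
    (h : Real.exp 1 * (Y * Real.exp q) ^ (1 / (1 - s)) ≤ m) :
    Y ^ m * (m.factorial : ℝ) ^ s / m.factorial ≤ Real.exp (-(q * m)) := by
  have hm : (0 : ℝ) < m.factorial := by positivity
  rw [div_le_iff₀ hm, Real.exp_neg, ← div_eq_inv_mul, le_div_iff₀ (Real.exp_pos _)]
  calc Y ^ m * (m.factorial : ℝ) ^ s * Real.exp (q * m)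
      = (Y * Real.exp q) ^ m * (m.factorial : ℝ) ^ s := by
        rw [mul_pow, ← Real.exp_nat_mul, mul_comm q]
        ring
    _ ≤ (m.factorial : ℝ) ^ (1 - s) * (m.factorial : ℝ) ^ s := by
        gcongr
        exact pow_le_factorial_rpow (by positivity) (by linarith) h
    _ = m.factorial := by rw [← Real.rpow_add hm, sub_add_cancel, Real.rpow_one]

theorem interpolation_error_le_mul_exp_neg {d m : ℕ} {A D₁ D₂ s q : ℝ} (hA : 0 ≤ A) (hD₁ : 0 ≤ D₁)
    (hD₂ : 1 ≤ D₂) (hs : s < 1)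
    (h : Real.exp 1 * (4 * d * A * Real.exp q) ^ (1 / (1 - s)) * D₂ ^ (4 / (1 - s)) ≤ m) :
    (4 * d) ^ m * (D₁ * (A * D₂ ^ 3) ^ m * (m.factorial : ℝ) ^ s) / m.factorial ≤
      D₁ * Real.exp (-(q * m)) := by
  have : 0 < 1 - s := sub_pos.2 hs
  have hm : Real.exp 1 * (4 * d * A * D₂ ^ 3 * Real.exp q) ^ (1 / (1 - s)) ≤ m :=
    calc Real.exp 1 * (4 * d * A * D₂ ^ 3 * Real.exp q) ^ (1 / (1 - s))
        ≤ Real.exp 1 * (4 * d * A * Real.exp q * D₂ ^ 4) ^ (1 / (1 - s)) := by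
          rw [mul_right_comm]
          gcongr
          norm_num
      _ = Real.exp 1 * (4 * d * A * Real.exp q) ^ (1 / (1 - s)) * D₂ ^ (4 / (1 - s)) := by
          rw [Real.mul_rpow (by positivity) (by positivity), ← Real.rpow_natCast D₂,
            ← Real.rpow_mul (by positivity), Nat.cast_ofNat, mul_one_div, ← mul_assoc]
      _ ≤ m := h
  calc (4 * d) ^ m * (D₁ * (A * D₂ ^ 3) ^ m * (m.factorial : ℝ) ^ s) / m.factorial
      = D₁ * ((4 * d * A * D₂ ^ 3) ^ m * (m.factorial : ℝ) ^ s / m.factorial) := by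
        simp only [mul_pow]
        ring
    _ ≤ D₁ * Real.exp (-(q * m)) := by
        gcongr
        exact pow_mul_factorial_rpow_div_factorial_le (by positivity) hs hm

theorem mul_exp_pow_mul_sq_exp_neg_le (d : ℕ) (c : ℝ) {X : ℝ} (hX : 1 ≤ X) :
    c * Real.exp X ^ d * Real.exp (-((d + 1 + 4 * c) / 2 * X)) ^ 2 ≤ Real.exp (-X) / 4 := by
  have hsmall : 4 * c * X * Real.exp (-(4 * c * X)) ≤ 1 := by
    rw [Real.exp_neg, ← div_eq_mul_inv, div_le_one (Real.exp_pos _)]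
    linarith [Real.add_one_le_exp (4 * c * X)]
  calc c * Real.exp X ^ d * Real.exp (-((d + 1 + 4 * c) / 2 * X)) ^ 2
      = c * (Real.exp (-X) * Real.exp (-(4 * c * X))) := by
        rw [mul_assoc, ← Real.exp_nat_mul, ← Real.exp_nat_mul, ← Real.exp_add, ← Real.exp_add]
        push_cast
        ring_nf
    _ = Real.exp (-X) * (4 * c * X * Real.exp (-(4 * c * X))) / (4 * X) := by field_simp
    _ ≤ Real.exp (-X) * 1 / (4 * 1) := by gcongr
    _ = Real.exp (-X) / 4 := by ring

theorem exists_le_exp_neg_of_mul_le (d : ℕ) {A s c : ℝ} (hA : 0 ≤ A) (hs : s < 1) (hc : 0 ≤ c) :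
    ∃ b : ℝ, d + 1 ≤ b ∧ ∀ {D₁ D₂ X : ℝ} {m : ℕ}, 0 ≤ D₁ → 1 ≤ D₂ → 1 ≤ X →
      D₂ ^ (4 / (1 - s)) ≤ X → b * X ≤ m →
      c * Real.exp X ^ d * (2 * ((4 * d) ^ m * (D₁ * (A * D₂ ^ 3) ^ m * (m.factorial : ℝ) ^ s) /
        m.factorial) ^ 2) ≤ D₁ ^ 2 * Real.exp (-X) / 2 := by
  set q : ℝ := (d + 1 + 4 * c) / 2
  set Z : ℝ := Real.exp 1 * (4 * d * A * Real.exp q) ^ (1 / (1 - s))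
  have hZ : 0 ≤ Z := by positivity
  refine ⟨Z + (d + 1), le_add_of_nonneg_left hZ, fun {D₁ D₂ X m} hD₁ hD₂ hX hDX hm => ?_⟩
  have hZm : Z * D₂ ^ (4 / (1 - s)) ≤ m :=
    calc Z * D₂ ^ (4 / (1 - s)) ≤ (Z + (d + 1)) * X := by
          gcongr
          exact le_add_of_nonneg_right (by positivity)
      _ ≤ m := hm
  have hXm : X ≤ m := hm.trans' (le_mul_of_one_le_left (by positivity)
    (by linarith [(Nat.cast_nonneg d : (0 : ℝ) ≤ d)]))
  calc _ ≤ c * Real.exp X ^ d * (2 * (D₁ * Real.exp (-(q * X))) ^ 2) := by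
        gcongr
        refine (interpolation_error_le_mul_exp_neg hA hD₁ hD₂ hs hZm).trans ?_
        gcongr
    _ = 2 * D₁ ^ 2 * (c * Real.exp X ^ d * Real.exp (-(q * X)) ^ 2) := by ring
    _ ≤ 2 * D₁ ^ 2 * (Real.exp (-X) / 4) := by
        gcongr
        exact mul_exp_pow_mul_sq_exp_neg_le d c hX
    _ = D₁ ^ 2 * Real.exp (-X) / 2 := by ring

theorem inv_decaying_density_le {γ₀ a X : ℝ} (hγ₀ : 0 < γ₀) (ha : 0 ≤ a) (hX : 1 ≤ X) :
    (γ₀ / (1 + Real.exp X ^ a))⁻¹ ≤ Real.exp ((a + 1 + γ₀⁻¹) * X) := by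
  have hexp : 1 ≤ Real.exp X ^ a := Real.one_le_rpow (Real.one_le_exp (by positivity)) ha
  calc (γ₀ / (1 + Real.exp X ^ a))⁻¹ = (1 + Real.exp X ^ a) * γ₀⁻¹ := by
        rw [inv_div, div_eq_mul_inv]
    _ ≤ Real.exp X ^ a * Real.exp X * Real.exp (γ₀⁻¹ * X) := by
        gcongr
        · nlinarith [Real.add_one_le_exp X]
        · nlinarith [Real.add_one_le_exp (γ₀⁻¹ * X), inv_pos.2 hγ₀]
    _ = Real.exp ((a + 1 + γ₀⁻¹) * X) := by
        rw [← Real.exp_mul, ← Real.exp_add, ← Real.exp_add]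
        ring_nf

theorem exists_le_exp_mul_sq {b c g k : ℝ} (hb : 0 ≤ b) (hc : 0 ≤ c) (hg : 0 ≤ g) (hk : 0 ≤ k) :
    ∃ K : ℝ, 1 ≤ K ∧ ∀ {X γ : ℝ} {m : ℕ}, 1 ≤ X → 0 < γ → γ⁻¹ ≤ Real.exp (g * X) → m ≤ b * X →
      c * (4 * (m * (k * m / (γ / 2)) ^ m) ^ 2 / γ) ≤ Real.exp (K * X ^ 2) := by
  have le_exp (t : ℝ) : t ≤ Real.exp t := by linarith [Real.add_one_le_exp t]
  refine ⟨1 + 4 * c + 2 * (b + b * (2 * k + b + g)) + g, by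
    linarith [show 0 ≤ 4 * c + 2 * (b + b * (2 * k + b + g)) + g by positivity],
    fun {X γ m} hX hγ hγX hm => ?_⟩
  have hfactor : (m : ℝ) * (k * m / (γ / 2)) ^ m ≤ Real.exp ((b + b * (2 * k + b + g)) * X ^ 2) :=
    calc (m : ℝ) * (k * m / (γ / 2)) ^ m = m * (2 * k * m * γ⁻¹) ^ m := by
          congr 2
          field_simp
      _ ≤ Real.exp m * (Real.exp (2 * k) * Real.exp m * Real.exp (g * X)) ^ m := by
          gcongr <;> exact le_exp _
      _ = Real.exp (m + m * (2 * k + m + g * X)) := by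
          rw [← Real.exp_add, ← Real.exp_add, ← Real.exp_nat_mul, ← Real.exp_add]
      _ ≤ Real.exp (b * X * X + b * X * (2 * k * X + b * X + g * X)) := by
          have hk2X : 2 * k ≤ 2 * k * X := le_mul_of_one_le_right (by positivity) hX
          have hmX : (m : ℝ) ≤ b * X * X := hm.trans (le_mul_of_one_le_right (by positivity) hX)
          have := mul_le_mul hm (add_le_add_left (add_le_add hk2X hm) (g * X)) (by positivity)
            (by positivity)
          exact Real.exp_le_exp.2 (add_le_add hmX this)
      _ = Real.exp ((b + b * (2 * k + b + g)) * X ^ 2) := by ring_nf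
  calc c * (4 * (m * (k * m / (γ / 2)) ^ m) ^ 2 / γ)
      = 4 * c * (m * (k * m / (γ / 2)) ^ m) ^ 2 * γ⁻¹ := by ring
    _ ≤ Real.exp (4 * c) * Real.exp ((b + b * (2 * k + b + g)) * X ^ 2) ^ 2 *
          Real.exp (g * X) := by
        gcongr
        exact le_exp _
    _ = Real.exp (4 * c + 2 * ((b + b * (2 * k + b + g)) * X ^ 2) + g * X) := by
        rw [← Real.exp_nat_mul, ← Real.exp_add, ← Real.exp_add, Nat.cast_ofNat]
    _ ≤ Real.exp ((1 + 4 * c + 2 * (b + b * (2 * k + b + g)) + g) * X ^ 2) := by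
        gcongr
        nlinarith [mul_le_mul_of_nonneg_left hX (by positivity : 0 ≤ g * X),
          mul_le_mul_of_nonneg_left (one_le_pow₀ hX : 1 ≤ X ^ 2) hc]

end Parameters

section Uncertainty

variable {d : ℕ} {f : EuclideanSpace ℝ (Fin d) → ℝ} {ρ : EuclideanSpace ℝ (Fin d) → ℝ}
  {ω : Set (EuclideanSpace ℝ (Fin d))} {r b γ B D₁ D₂ : ℝ} {m : ℕ}

theorem volume_ball_zero_eq_ofReal (hr : 0 < r) :
    volume (Metric.ball (0 : EuclideanSpace ℝ (Fin d)) r) =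
      ENNReal.ofReal (volume.real (Metric.ball (0 : EuclideanSpace ℝ (Fin d)) 1) * r ^ d) := by
  rw [Measure.addHaar_ball_of_pos _ _ hr, finrank_euclideanSpace_fin, mul_comm,
    ENNReal.ofReal_mul measureReal_nonneg, ofReal_measureReal]

theorem lintegral_closedBall_le_of_dense (hf : ContDiff ℝ (⊤ : ℕ∞) f)
    (hρ : ∀ x ∈ Metric.closedBall 0 r, 0 < ρ x) (hρb : ∀ x ∈ Metric.closedBall 0 r, ρ x ≤ b)
    (hγ : 0 < γ) (hω : MeasurableSet ω)
    (hdens : ∀ x ∈ Metric.closedBall 0 r,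
      ENNReal.ofReal γ * volume (Metric.ball x (ρ x)) ≤ volume (Metric.ball x (ρ x) ∩ ω))
    (hm : 1 ≤ m) (hB0 : 0 ≤ B)
    (hB : ∀ x ∈ Metric.closedBall 0 r, ∀ w : List (Fin d), w.length = m →
      ∀ z ∈ Metric.ball x (ρ x), ρ x ^ m * |wordDeriv w f z| ≤ B) (hrb : 0 < r + b) :
    ∫⁻ y in Metric.closedBall 0 r, ‖f y‖ₑ ^ 2 ≤
      ENNReal.ofReal (Besicovitch.multiplicity (EuclideanSpace ℝ (Fin d)) *
          (4 * (m * (4 ^ (d + 1) * m / (γ / 2)) ^ m) ^ 2 / γ)) * (∫⁻ y in ω, ‖f y‖ₑ ^ 2) +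
        ENNReal.ofReal (Besicovitch.multiplicity (EuclideanSpace ℝ (Fin d)) *
          (2 * ((4 * d) ^ m * B / m.factorial) ^ 2 *
            (volume.real (Metric.ball (0 : EuclideanSpace ℝ (Fin d)) 1) * (r + b) ^ d))) := by
  refine (setLIntegral_le_multiplicity_mul (U := Metric.ball 0 (r + b)) hρ hρb
    (fun x hx => Metric.ball_subset_ball' (by
      linarith [hρb x hx, Metric.mem_closedBall.1 hx]))
    fun x hx => lintegral_ball_le_of_dense hf hγ (measurableSet_ball.inter hω)
      Set.inter_subset_left (hdens x hx) hm hB0 (hB x hx)).trans_eq ?_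
  rw [volume_ball_zero_eq_ofReal hrb, ← ENNReal.ofReal_mul (by positivity), mul_add, ← mul_assoc,
    ← ENNReal.ofReal_natCast, ← ENNReal.ofReal_mul (by positivity),
    ← ENNReal.ofReal_mul (by positivity)]

theorem radius_le_of_mem_closedBall {R δ : ℝ} (hR : 0 ≤ R) (hδ1 : δ ≤ 1) (hr : 1 ≤ r)
    {x : EuclideanSpace ℝ (Fin d)} (hρR : ρ x ≤ R * japaneseBracket x ^ δ)
    (hx : x ∈ Metric.closedBall 0 r) : ρ x ≤ 2 * R * r := by
  have hbracket : japaneseBracket x ≤ 2 * r := by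
    rw [mem_closedBall_zero_iff] at hx
    exact Real.sqrt_le_iff.2 ⟨by positivity, by nlinarith [norm_nonneg x]⟩
  calc ρ x ≤ R * japaneseBracket x ^ δ := hρR
    _ ≤ R * (2 * r) := by
        gcongr
        exact (Real.rpow_le_self_of_one_le (one_le_japaneseBracket x) hδ1).trans hbracket
    _ = 2 * R * r := by ring

theorem exists_lintegral_closedBall_exp_le (d : ℕ) {ν μ δ R η γ₀ a : ℝ} (r₀ : ℝ) (hν : 0 ≤ ν)
    (hμ : 0 ≤ μ) (hδ0 : 0 ≤ δ) (hδ1 : δ ≤ 1) (hs : δ * ν + μ < 1) (hR : 0 ≤ R) (hη : η < 1)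
    (hγ₀ : 0 < γ₀) (ha : 0 ≤ a) :
    ∃ K : ℝ, 1 ≤ K ∧ ∀ {f : EuclideanSpace ℝ (Fin d) → ℝ} {D₁ D₂ : ℝ},
      HasGelfandShilovBounds f D₁ D₂ ν μ → ContDiff ℝ (⊤ : ℕ∞) f → 0 ≤ D₁ → 1 ≤ D₂ →
      ∀ {ρ : EuclideanSpace ℝ (Fin d) → ℝ}, (∀ x, 0 < ρ x) →
        (∀ x, ρ x ≤ R * japaneseBracket x ^ δ) → (∀ x, r₀ ≤ ‖x‖ → ρ x ≤ η * ‖x‖) →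
      ∀ {ω : Set (EuclideanSpace ℝ (Fin d))}, MeasurableSet ω →
        (∀ x, ENNReal.ofReal (γ₀ / (1 + ‖x‖ ^ a)) * volume (Metric.ball x (ρ x)) ≤
          volume (Metric.ball x (ρ x) ∩ ω)) →
      ∀ {X : ℝ}, 1 ≤ X → D₂ ^ (4 / (1 - (δ * ν + μ))) ≤ X →
        ∫⁻ x in Metric.closedBall 0 (Real.exp X), ‖f x‖ₑ ^ 2 ≤
          ENNReal.ofReal (Real.exp (K * X ^ 2)) * (∫⁻ x in ω, ‖f x‖ₑ ^ 2) +
            ENNReal.ofReal (D₁ ^ 2 * Real.exp (-X) / 2) := by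
  set M := Besicovitch.multiplicity (EuclideanSpace ℝ (Fin d))
  set c₁ := volume.real (Metric.ball (0 : EuclideanSpace ℝ (Fin d)) 1)
  obtain ⟨A, hA, hderiv⟩ := HasGelfandShilovBounds.exists_radius_pow_mul_abs_wordDeriv_le d r₀
    hν hμ (by nlinarith) hδ0 hδ1 hR hη
  obtain ⟨b, hdb, herror⟩ := exists_le_exp_neg_of_mul_le d hA hs
    (by positivity : 0 ≤ M * (c₁ * (1 + 2 * R) ^ d))
  have hb : 1 ≤ b := hdb.trans' (le_add_of_nonneg_left d.cast_nonneg)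
  obtain ⟨K, hK, hcost⟩ := exists_le_exp_mul_sq (b := b + 1) (c := M) (g := a + 1 + γ₀⁻¹)
    (k := 4 ^ (d + 1)) (by positivity) (by positivity) (by positivity) (by positivity)
  refine ⟨K, hK, fun {f D₁ D₂} h hf hD₁ hD₂ {ρ} hρ hρR hρη {ω} hω hdens {X} hX hDX => ?_⟩
  set m := ⌈b * X⌉₊
  set r := Real.exp X
  set γ := γ₀ / (1 + r ^ a)
  have hr : 1 ≤ r := Real.one_le_exp (by positivity)
  have hγ : 0 < γ := by positivity
  have hmb : b * X ≤ m := Nat.le_ceil _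
  have hbX : b ≤ b * X := le_mul_of_one_le_right (by positivity) hX
  have hm : d + 1 ≤ m := by exact_mod_cast hdb.trans (hbX.trans hmb)
  have hmX : m ≤ (b + 1) * X := by linarith [Nat.ceil_lt_add_one (by positivity : 0 ≤ b * X)]
  have hdensγ : ∀ x ∈ Metric.closedBall 0 r,
      ENNReal.ofReal γ * volume (Metric.ball x (ρ x)) ≤ volume (Metric.ball x (ρ x) ∩ ω) :=
    fun x hx => (hdens x).trans' (by
      unfold γ
      gcongr
      exact mem_closedBall_zero_iff.1 hx)
  have hderivm : ∀ x ∈ Metric.closedBall 0 r, ∀ w : List (Fin d), w.length = m →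
      ∀ z ∈ Metric.ball x (ρ x), ρ x ^ m * |wordDeriv w f z| ≤
        D₁ * (A * D₂ ^ 3) ^ m * (m.factorial : ℝ) ^ (δ * ν + μ) := fun x _ w hw z hz => by
    rw [← hw]
    exact hderiv h hf hD₁ hD₂ (hρR x) (hρη x) hz (List.ne_nil_of_length_pos (by omega)) (by omega)
  refine (lintegral_closedBall_le_of_dense hf (fun x _ => hρ x)
    (fun x hx => radius_le_of_mem_closedBall hR hδ1 hr (hρR x) hx) hγ hω hdensγ
    (Nat.le_of_add_left_le hm) (by positivity) hderivm (by positivity)).trans ?_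
  gcongr
  · exact hcost hX hγ (inv_decaying_density_le hγ₀ ha hX) hmX
  · refine (le_of_eq ?_).trans (herror hD₁ hD₂ hX hDX hmb)
    change M * (_ * (c₁ * (r + 2 * R * r) ^ d)) = M * (c₁ * _) * r ^ d * _
    rw [← one_add_mul, mul_pow (1 + 2 * R)]
    ring

theorem mul_exp_neg_one_add_log_add_le {ε t : ℝ} (hε : 0 < ε) (ht : 0 ≤ t) (hD₂ : D₂ ≤ t) :
    D₂ * Real.exp (-(1 + Real.log (1 / ε) + t)) ≤ ε / 2 := by
  have hhalf : D₂ / Real.exp (1 + t) ≤ 1 / 2 := by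
    rw [div_le_iff₀ (Real.exp_pos _), Real.exp_add]
    nlinarith [Real.add_one_le_exp (1 : ℝ), Real.add_one_le_exp t]
  calc D₂ * Real.exp (-(1 + Real.log (1 / ε) + t)) = ε * (D₂ / Real.exp (1 + t)) := by
        rw [one_div, Real.log_inv, show -(1 + -Real.log ε + t) = Real.log ε - (1 + t) by ring,
          Real.exp_sub, Real.exp_log hε]
        ring
    _ ≤ ε * (1 / 2) := mul_le_mul_of_nonneg_left hhalf hε.le
    _ = ε / 2 := by ring

theorem mul_exp_neg_add_sq_div_exp_le (D₁ : ℝ) {ε X : ℝ} (hε : ε ≤ 1) (hD₂ : 1 ≤ D₂)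
    (h : D₂ * Real.exp (-X) ≤ ε / 2) :
    D₁ ^ 2 * Real.exp (-X) / 2 + (D₁ * D₂ / Real.exp X) ^ 2 ≤ ε * D₁ ^ 2 := by
  have hX : Real.exp (-X) ≤ ε / 2 := (le_mul_of_one_le_left (Real.exp_pos _).le hD₂).trans h
  have hε0 : 0 ≤ ε := by linarith [Real.exp_pos (-X)]
  calc D₁ ^ 2 * Real.exp (-X) / 2 + (D₁ * D₂ / Real.exp X) ^ 2
      = D₁ ^ 2 * (Real.exp (-X) / 2 + (D₂ * Real.exp (-X)) ^ 2) := by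
        rw [Real.exp_neg]
        ring
    _ ≤ D₁ ^ 2 * (ε / 2 / 2 + (ε / 2) ^ 2) := by gcongr
    _ ≤ D₁ ^ 2 * ε := by
        gcongr
        nlinarith
    _ = ε * D₁ ^ 2 := mul_comm _ _

end Uncertainty

theorem uncertainty_principle_decay_general (d : ℕ) {ν μ δ R η γ₀ a : ℝ} (r₀ : ℝ) (hν : 0 ≤ ν)
    (hμ : 0 ≤ μ) (hδ0 : 0 ≤ δ) (hδ1 : δ ≤ 1) (hs : δ * ν + μ < 1) (hR : 0 ≤ R) (hη : η < 1)
    (hγ₀ : 0 < γ₀) (ha : 0 ≤ a) :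
    ∃ K : ℝ, 1 ≤ K ∧ ∀ {f : EuclideanSpace ℝ (Fin d) → ℝ} {D₁ D₂ : ℝ},
      0 ≤ D₁ → 1 ≤ D₂ → ContDiff ℝ (⊤ : ℕ∞) f → HasGelfandShilovBounds f D₁ D₂ ν μ →
      ∀ {ρ : EuclideanSpace ℝ (Fin d) → ℝ}, (∀ x, 0 < ρ x) →
        (∀ x, ρ x ≤ R * japaneseBracket x ^ δ) → (∀ x, r₀ ≤ ‖x‖ → ρ x ≤ η * ‖x‖) →
      ∀ {ω : Set (EuclideanSpace ℝ (Fin d))}, MeasurableSet ω →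
        (∀ x, ENNReal.ofReal (γ₀ / (1 + ‖x‖ ^ a)) * volume (Metric.ball x (ρ x)) ≤
          volume (Metric.ball x (ρ x) ∩ ω)) →
      ∀ {ε : ℝ}, 0 < ε → ε ≤ 1 →
        eLpNorm f 2 volume ^ 2 ≤
          ENNReal.ofReal (Real.exp (K *
              (1 + Real.log (1 / ε) + D₂ ^ (4 / (1 - (δ * ν + μ)))) ^ 2)) *
            eLpNorm f 2 (volume.restrict ω) ^ 2 +
          ENNReal.ofReal (ε * D₁ ^ 2) := by
  obtain ⟨K, hK, hcore⟩ :=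
    exists_lintegral_closedBall_exp_le d r₀ hν hμ hδ0 hδ1 hs hR hη hγ₀ ha
  refine ⟨K, hK, fun {f D₁ D₂} hD₁ hD₂ hf h {ρ} hρ hρR hρη {ω} hω hdens {ε} hε0 hε1 => ?_⟩
  set t := D₂ ^ (4 / (1 - (δ * ν + μ)))
  set X := 1 + Real.log (1 / ε) + t
  have hD₂t : D₂ ≤ t := Real.self_le_rpow_of_one_le hD₂
    ((one_le_div (by linarith)).2 (by nlinarith))
  have hlog : 0 ≤ Real.log (1 / ε) := Real.log_nonneg ((one_le_div hε0).2 hε1)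
  have hsmall := mul_exp_neg_one_add_log_add_le hε0 (by linarith) hD₂t
  calc eLpNorm f 2 volume ^ 2
      = (∫⁻ x in Metric.closedBall 0 (Real.exp X), ‖f x‖ₑ ^ 2) +
          ∫⁻ x in (Metric.closedBall 0 (Real.exp X))ᶜ, ‖f x‖ₑ ^ 2 := by
        rw [sq_eLpNorm_two_eq_lintegral, lintegral_add_compl _ measurableSet_closedBall]
    _ ≤ ENNReal.ofReal (Real.exp (K * X ^ 2)) * (∫⁻ x in ω, ‖f x‖ₑ ^ 2) +
          ENNReal.ofReal (D₁ ^ 2 * Real.exp (-X) / 2) +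
          ENNReal.ofReal (D₁ * D₂ / Real.exp X) ^ 2 :=
        add_le_add (hcore h hf hD₁ hD₂ hρ hρR hρη hω hdens (by linarith) (by linarith))
          (h.lintegral_compl_closedBall_le (Real.exp_pos X))
    _ ≤ _ := by
        rw [add_assoc, ← ENNReal.ofReal_pow (by positivity),
          ← ENNReal.ofReal_add (by positivity) (by positivity), sq_eLpNorm_two_eq_lintegral]
        gcongr
        exact mul_exp_neg_add_sq_div_exp_le D₁ hε1 hD₂ hsmall

/-- Theorem 2.2 (uncertainty principle with error term, variable density with
polynomial decay). -/
theorem uncertainty_principle_decay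
    (d : ℕ) (hd : 1 ≤ d) (ν μ δ R η r₀ γ₀ a : ℝ)
    (hν : 0 ≤ ν) (hμ0 : 0 ≤ μ) (hμ1 : μ < 1)
    (hδ0 : 0 ≤ δ) (hδ1 : δ ≤ 1) (hs : δ * ν + μ < 1)
    (hR : 1 ≤ R) (hη0 : 0 < η) (hη1 : η < 1) (hr₀ : 1 ≤ r₀)
    (hγ0 : 0 < γ₀) (hγ1 : γ₀ < 1) (ha : 0 < a) :
    ∃ K : ℝ, 1 ≤ K ∧
      ∀ (f : EuclideanSpace ℝ (Fin d) → ℝ) (D₁ D₂ : ℝ),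
        0 < D₁ → 1 ≤ D₂ → ContDiff ℝ (⊤ : ℕ∞) f →
        (∀ (n : ℕ) (β : Fin d → ℕ),
          eLpNorm (fun x => (1 + ‖x‖ ^ 2) ^ ((n : ℝ) / 2) * mderiv β f x) 2 volume ≤
            ENNReal.ofReal (D₁ * D₂ ^ (n + ∑ i, β i) *
              (n.factorial : ℝ) ^ ν * (((∑ i, β i).factorial : ℝ)) ^ μ)) →
        ∀ ρ : EuclideanSpace ℝ (Fin d) → ℝ, Measurable ρ → (∀ x, 0 < ρ x) →
          (∀ x, ρ x ≤ R * (1 + ‖x‖ ^ 2) ^ (δ / 2)) →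
          (∀ x : EuclideanSpace ℝ (Fin d), r₀ ≤ ‖x‖ → ρ x ≤ η * ‖x‖) →
        ∀ ω : Set (EuclideanSpace ℝ (Fin d)), MeasurableSet ω →
          (∀ x, ENNReal.ofReal (γ₀ / (1 + ‖x‖ ^ a)) * volume (Metric.ball x (ρ x)) ≤
            volume (Metric.ball x (ρ x) ∩ ω)) →
        ∀ ε : ℝ, 0 < ε → ε ≤ 1 →
          (eLpNorm f 2 volume) ^ 2 ≤
            ENNReal.ofReal
                (Real.exp (K *
                  (1 + Real.log (1 / ε) + D₂ ^ ((4 : ℝ) / (1 - (δ * ν + μ)))) ^ 2)) *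
              (eLpNorm f 2 (volume.restrict ω)) ^ 2 +
            ENNReal.ofReal (ε * D₁ ^ 2) := by
  simp only [rpow_one_add_norm_sq, Real.rpow_natCast]
  obtain ⟨K, hK, h⟩ := uncertainty_principle_decay_general d r₀ hν hμ0 hδ0 hδ1 hs
    (zero_le_one.trans hR) hη1 hγ0 ha.le
  exact ⟨K, hK, fun f D₁ D₂ hD₁ hD₂ hf hGS ρ _ hρ hρR hρη ω hω hdens ε hε0 hε1 =>
    h hD₁.le hD₂ hf hGS hρ hρR hρη hω hdens hε0 hε1⟩
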